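/- arXiv:1308.0881 — 3 statements merged into one kernel-verified Lean document; each statement's English description precedes it below -/
import Mathlib

section
/- Let z, s ∈ ℝ with s ≠ −1 and let f ∈ L¹(ℝ; ℂ). Then there exists u ∈ L¹(ℝ; ℂ) with ‖u‖_{L¹} ≤ |s+1|^{−1}·‖f‖_{L¹} such that for every test function φ ∈ C_c^∞(ℝ): ∫_ℝ u(p)·( −(p−z)·φ'(p) − (s+1)·φ(p) ) dp = ∫_ℝ f(p)·φ(p) dp. -/
open MeasureTheory

lemma fuchs_cov {E : Type*} [NormedAddCommGroup E] [NormedSpace ℝ E] (z c : ℝ) (hc : 0 < c)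
    (g : ℝ → E) : ∫ p, c • g (z + c * (p - z)) = ∫ p, g p := by
  have h1 : ∫ p, g (z + c * (p - z)) = ∫ p, g (z + c * p) :=
    integral_sub_right_eq_self (fun p => g (z + c * p)) z
  have h2 : ∫ p, g (z + c * p) = |c⁻¹| • ∫ p, g (z + p) :=
    Measure.integral_comp_mul_left (fun p => g (z + p)) c
  rw [integral_smul, h1, h2, integral_add_left_eq_self g z, abs_of_pos (inv_pos.2 hc), smul_smul,
    mul_inv_cancel₀ hc.ne', one_smul]

lemma fuchs_int (z c : ℝ) (hc : 0 < c)
    (g : ℝ → ℂ) (hg : Integrable g) : Integrable (fun p => g (z + c * (p - z))) := by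
  have h1 : Integrable (fun p => g (z + p)) := hg.comp_add_left z
  have h2 : Integrable (fun p => g (z + c * p)) := h1.comp_mul_left' hc.ne'
  exact h2.comp_sub_right z

lemma fuchs_inner (z σ b : ℝ) (hb : 0 < b) (hσ : σ * σ = 1) (φ : ℝ → ℝ)
    (hφ : ContDiff ℝ (⊤ : ℕ∞) φ) (C D : ℝ) (hC : ∀ x, |φ x| ≤ C)
    (hD : ∀ x, |-(x - z) * deriv φ x - (σ * b) * φ x| ≤ D) (q : ℝ) :
    ∫ t in Set.Ioi (0:ℝ), (-σ * Real.exp (-b * t)) *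
      (-((z + Real.exp (-(σ * t)) * (q - z)) - z) * deriv φ (z + Real.exp (-(σ * t)) * (q - z))
        - (σ * b) * φ (z + Real.exp (-(σ * t)) * (q - z))) = φ q := by
  have hd : ∀ t : ℝ, HasDerivAt (fun t => -(Real.exp (-b * t) *
      φ (z + Real.exp (-(σ * t)) * (q - z))))
      ((-σ * Real.exp (-b * t)) *
      (-((z + Real.exp (-(σ * t)) * (q - z)) - z) * deriv φ (z + Real.exp (-(σ * t)) * (q - z))
        - (σ * b) * φ (z + Real.exp (-(σ * t)) * (q - z)))) t := by
    intro t
    have e1 : HasDerivAt (fun t : ℝ => Real.exp (-b * t)) (Real.exp (-b * t) * (-b * 1)) t :=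
      ((hasDerivAt_id t).const_mul (-b)).exp
    have e2 : HasDerivAt (fun t : ℝ => Real.exp (-(σ * t))) (Real.exp (-(σ * t)) * (-(σ * 1))) t :=
      (((hasDerivAt_id t).const_mul σ).neg).exp
    have e3 := (e2.mul_const (q - z)).const_add z
    have hφ' : HasDerivAt φ (deriv φ (z + Real.exp (-(σ * t)) * (q - z)))
        (z + Real.exp (-(σ * t)) * (q - z)) :=
      ((hφ.differentiable (by simp)) _).hasDerivAt
    have e4 := hφ'.comp t e3
    have e5 := (e1.mul e4).neg
    refine e5.congr_deriv ?_
    simp only [Function.comp]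
    linear_combination (Real.exp (-b * t) * b * φ (z + Real.exp (-(σ * t)) * (q - z))) * (-hσ)
  have hexp : IntegrableOn (fun t : ℝ => Real.exp (-b * t)) (Set.Ioi 0) :=
    exp_neg_integrableOn_Ioi 0 hb
  have hcd : Continuous (deriv φ) := hφ.continuous_deriv (by simp)
  have hcφ : Continuous φ := hφ.continuous
  have := integral_Ioi_of_hasDerivAt_of_tendsto' (a := (0:ℝ)) (m := 0) (fun t _ => hd t) ?_ ?_
  · rw [this]; simp
  · refine Integrable.mul_bdd (c := D) (hexp.const_mul (-σ)) ?_ ?_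
    · exact Continuous.aestronglyMeasurable (by fun_prop)
    · exact Filter.Eventually.of_forall fun t => hD _
  · have h0 : Filter.Tendsto (fun t : ℝ => Real.exp (-b * t) * C) Filter.atTop (nhds 0) := by
      have : Filter.Tendsto (fun t : ℝ => Real.exp (-b * t)) Filter.atTop (nhds 0) := by
        refine Real.tendsto_exp_atBot.comp ?_
        exact Filter.tendsto_id.const_mul_atTop_of_neg (by linarith)
      simpa using this.mul_const C
    refine squeeze_zero_norm (fun t => ?_) h0
    rw [norm_neg, norm_mul, Real.norm_of_nonneg (Real.exp_pos _).le]
    exact mul_le_mul_of_nonneg_left (hC _) (Real.exp_pos _).le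

lemma fuchs_main (z σ b : ℝ) (hb : 0 < b) (hσ : σ * σ = 1)
    (f : ℝ → ℂ) (hf : Integrable f) (hm : StronglyMeasurable f) :
    ∃ u : ℝ → ℂ, Integrable u ∧
      (∫ p, ‖u p‖) ≤ b⁻¹ * ∫ p, ‖f p‖ ∧
      ∀ φ : ℝ → ℝ, ContDiff ℝ (⊤ : ℕ∞) φ → HasCompactSupport φ →
        ∫ p, u p * ((-(p - z) * deriv φ p - (σ * b) * φ p : ℝ) : ℂ)
          = ∫ p, f p * ((φ p : ℝ) : ℂ) := by
  have hσn : |σ| = 1 := by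
    rcases mul_self_eq_one_iff.1 hσ with h | h <;> simp [h]
  set μ : Measure ℝ := volume.restrict (Set.Ioi (0:ℝ)) with hμ
  have hexp : Integrable (fun t : ℝ => Real.exp (-b * t)) μ :=
    exp_neg_integrableOn_Ioi 0 hb
  have hexpv : ∫ t, Real.exp (-b * t) ∂μ = b⁻¹ := by
    have := integral_exp_mul_Ioi (a := -b) (by linarith) 0
    rw [hμ, this]; simp
  let F : ℝ → ℝ → ℂ := fun t p => (-σ * Real.exp (-b * t)) •
    (Real.exp (σ * t) • f (z + Real.exp (σ * t) * (p - z)))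
  have hFm : AEStronglyMeasurable (Function.uncurry F) (μ.prod volume) := by
    apply StronglyMeasurable.aestronglyMeasurable
    have hg : Measurable (fun x : ℝ × ℝ => z + Real.exp (σ * x.1) * (x.2 - z)) := by fun_prop
    have h1 : StronglyMeasurable (fun x : ℝ × ℝ => f (z + Real.exp (σ * x.1) * (x.2 - z))) :=
      hm.comp_measurable hg
    have h2 : StronglyMeasurable (fun x : ℝ × ℝ => -σ * Real.exp (-b * x.1)) :=
      Measurable.stronglyMeasurable (by fun_prop)
    have h3 : StronglyMeasurable (fun x : ℝ × ℝ => Real.exp (σ * x.1)) :=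
      Measurable.stronglyMeasurable (by fun_prop)
    exact h2.smul (h3.smul h1)
  have hFn : ∀ t, ∫ p, ‖F t p‖ = Real.exp (-b * t) * ∫ p, ‖f p‖ := by
    intro t
    rw [← fuchs_cov z (Real.exp (σ * t)) (Real.exp_pos _) (fun p => ‖f p‖),
      ← integral_const_mul]
    congr 1
    ext p
    simp only [F, norm_smul, norm_mul, norm_neg, Real.norm_eq_abs, hσn, Real.abs_exp, one_mul,
      smul_eq_mul]
  have hFi : Integrable (Function.uncurry F) (μ.prod volume) := by
    rw [integrable_prod_iff hFm]
    constructor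
    · exact Filter.Eventually.of_forall fun t =>
        ((fuchs_int z _ (Real.exp_pos (σ * t)) f hf).smul (Real.exp (σ * t))).smul
          (-σ * Real.exp (-b * t))
    · simp only [Function.uncurry]
      simp_rw [hFn]
      exact hexp.mul_const _
  refine ⟨fun p => ∫ t, F t p ∂μ, hFi.integral_prod_right, ?_, ?_⟩
  · calc ∫ p, ‖∫ t, F t p ∂μ‖ ≤ ∫ p, ∫ t, ‖F t p‖ ∂μ := by
          refine integral_mono hFi.integral_prod_right.norm hFi.norm.integral_prod_right ?_
          intro p
          exact norm_integral_le_integral_norm _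
      _ = ∫ t, (∫ p, ‖F t p‖) ∂μ := (integral_integral_swap (f := fun t p => ‖F t p‖) hFi.norm).symm
      _ = _ := by simp_rw [hFn]; rw [integral_mul_const, hexpv]
  intro φ hφ hφc
  have hcd : Continuous (deriv φ) := hφ.continuous_deriv (by simp)
  have hcφ : Continuous φ := hφ.continuous
  obtain ⟨C, hC⟩ := hφc.exists_bound_of_continuous hcφ
  set ψ : ℝ → ℝ := fun p => -(p - z) * deriv φ p - (σ * b) * φ p with hψ
  have hψc : Continuous ψ := by fun_prop
  have hψs : HasCompactSupport ψ := by
    have h1 : HasCompactSupport (fun p => -(p - z) * deriv φ p) :=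
      HasCompactSupport.mul_left (f := fun p => -(p - z)) hφc.deriv
    have h2 : HasCompactSupport (fun p => (σ * b) * φ p) :=
      HasCompactSupport.mul_left (f := fun p => σ * b) hφc
    exact h1.sub h2
  obtain ⟨D, hD⟩ := hψs.exists_bound_of_continuous hψc
  have hI1 : Integrable (Function.uncurry fun t p => F t p * ((ψ p : ℝ) : ℂ)) (μ.prod volume) := by
    refine Integrable.mul_bdd (c := D) hFi ?_ ?_
    · exact Continuous.aestronglyMeasurable (by fun_prop)
    · exact Filter.Eventually.of_forall fun x => by simpa using hD x.2
  let G : ℝ → ℝ → ℂ := fun t q => (((-σ * Real.exp (-b * t) : ℝ) : ℂ) * f q) *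
    ((ψ (z + Real.exp (-(σ * t)) * (q - z)) : ℝ) : ℂ)
  have hI2 : Integrable (Function.uncurry G) (μ.prod volume) := by
    refine Integrable.mul_bdd (c := D) ?_ ?_ ?_
    · exact Integrable.mul_prod (f := fun t : ℝ => ((-σ * Real.exp (-b * t) : ℝ) : ℂ))
        (hexp.const_mul (-σ)).ofReal hf
    · exact Continuous.aestronglyMeasurable (by fun_prop)
    · exact Filter.Eventually.of_forall fun x => by simpa using hD _
  calc ∫ p, (∫ t, F t p ∂μ) * ((ψ p : ℝ) : ℂ)
      = ∫ p, ∫ t, F t p * ((ψ p : ℝ) : ℂ) ∂μ := by simp_rw [integral_mul_const]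
    _ = ∫ t, (∫ p, F t p * ((ψ p : ℝ) : ℂ)) ∂μ := (integral_integral_swap hI1).symm
    _ = ∫ t, (∫ q, G t q) ∂μ := by
        congr 1
        ext t
        rw [← fuchs_cov z (Real.exp (σ * t)) (Real.exp_pos _) (G t)]
        congr 1
        ext p
        have : z + Real.exp (-(σ * t)) * (z + Real.exp (σ * t) * (p - z) - z) = p := by
          have : Real.exp (-(σ * t)) * Real.exp (σ * t) = 1 := by
            rw [← Real.exp_add]; simp
          linear_combination (p - z) * this
        simp only [F, G, this, Complex.real_smul]
        ring
    _ = ∫ q, ∫ t, G t q ∂μ := integral_integral_swap hI2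
    _ = ∫ q, f q * ((φ q : ℝ) : ℂ) := by
        congr 1
        ext q
        rw [← fuchs_inner z σ b hb hσ φ hφ C D hC hD q, ← integral_complex_ofReal,
          ← integral_const_mul]
        congr 1
        ext t
        simp only [G, hψ]
        push_cast
        ring

/-- distributional solvability in `L¹(ℝ;ℂ)` of the Fuchsian equation
`L_{z,s} u = (p−z)∂_p u − s·u = f` for `s ≠ −1`, with the operator norm bound
`‖u‖_{L¹} ≤ |s+1|⁻¹·‖f‖_{L¹}`.  The equation is understood by duality:
`∫ u(p)·(−(p−z)φ'(p) − (s+1)φ(p)) dp = ∫ f(p)·φ(p) dp` for all test functions `φ`. -/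
theorem fuchsian_L1_solvability (z s : ℝ) (hs : s ≠ -1)
    (f : ℝ → ℂ) (hf : Integrable f) :
    ∃ u : ℝ → ℂ, Integrable u ∧
      (∫ p, ‖u p‖) ≤ |s + 1|⁻¹ * ∫ p, ‖f p‖ ∧
      ∀ φ : ℝ → ℝ, ContDiff ℝ (⊤ : ℕ∞) φ → HasCompactSupport φ →
        ∫ p, u p * ((-(p - z) * deriv φ p - (s + 1) * φ p : ℝ) : ℂ)
          = ∫ p, f p * ((φ p : ℝ) : ℂ) := by
  have ha : s + 1 ≠ 0 := fun h => hs (by linarith)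
  obtain ⟨σ, hσ, hσa⟩ : ∃ σ : ℝ, σ * σ = 1 ∧ σ * |s + 1| = s + 1 := by
    rcases lt_or_gt_of_ne ha with h | h
    · exact ⟨-1, by norm_num, by rw [abs_of_neg h]; ring⟩
    · exact ⟨1, by norm_num, by rw [abs_of_pos h]; ring⟩
  have hae := hf.1.ae_eq_mk
  obtain ⟨u, hu, hn, he⟩ := fuchs_main z σ |s + 1| (abs_pos.2 ha) hσ (hf.1.mk f)
    (hf.congr hae) hf.1.stronglyMeasurable_mk
  rw [hσa] at he
  refine ⟨u, hu, ?_, fun φ h1 h2 => ?_⟩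
  · have h : ∫ p, ‖f p‖ = ∫ p, ‖hf.1.mk f p‖ := integral_congr_ae (hae.fun_comp norm)
    rw [h]
    exact hn
  · rw [he φ h1 h2]
    refine integral_congr_ae ?_
    filter_upwards [hae] with p hp
    rw [hp]
end

section
/- Let μ ∈ (1/2, ∞). For n ∈ ℤ set m₊ = (2+n)·μ and m₋ = (2−n)·μ, and define for φ ∈ C_c^∞(ℝ) the operators Q†φ(p) = −d/dp((p−n)·φ(p)), P†φ(p) = −d/dp(p·φ(p)), and A_nφ := P†( (Q† + m₊)( (Q† + m₋) φ ) ) − (2μ−1)·( Q†φ − P†φ ), where (Q† + m)φ := Q†φ + m·φ. Then there exist N₀ ∈ ℕ and a constant C < ∞, depending only on μ, such that for every n ∈ ℤ with n = 0 or |n| ≥ N₀, and every finite complex Borel measure f = g·λ + c·δ₀ on ℝ with g ∈ L¹(ℝ; ℂ) and c ∈ ℂ, there exists a finite complex Borel measure u = h·λ + d·δ₀ with h ∈ L¹(ℝ; ℂ) and d ∈ ℂ, whose total variation norm satisfies ‖u‖ ≤ C·(1+n²)^{−1}·‖f‖, such that ∫_ℝ A_nφ du = ∫_ℝ φ df for all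 φ ∈ C_c^∞(ℝ). -/
open MeasureTheory

/-- Formal adjoint `Q†φ(p) = −d/dp((p−n)·φ(p))` of `Q = (p−n)∂_p`. -/
noncomputable def Qdag (n : ℝ) (φ : ℝ → ℝ) : ℝ → ℝ :=
  fun p => -deriv (fun q => (q - n) * φ q) p

/-- Formal adjoint `P†φ(p) = −d/dp(p·φ(p))` of `P = p∂_p`. -/
noncomputable def Pdag (φ : ℝ → ℝ) : ℝ → ℝ :=
  fun p => -deriv (fun q => q * φ q) p

/-- The formal adjoint `A_n = P†(Q† + m₊)(Q† + m₋) − (2μ−1)(Q† − P†)` of the linearized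
spiral operator `L_n = (Q + m₋)(Q + m₊)P − (2μ−1)(Q − P)`, where `m₊ = (2+n)μ`,
`m₋ = (2−n)μ`. -/
noncomputable def Aop (μ : ℝ) (n : ℤ) (φ : ℝ → ℝ) : ℝ → ℝ :=
  fun p =>
    Pdag (fun q => Qdag (n : ℝ) (fun q' => Qdag (n : ℝ) φ q' + (2 - (n : ℝ)) * μ * φ q') q
        + (2 + (n : ℝ)) * μ * (Qdag (n : ℝ) φ q + (2 - (n : ℝ)) * μ * φ q)) p
      - (2 * μ - 1) * (Qdag (n : ℝ) φ p - Pdag φ p)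


noncomputable def kap (m : ℝ) : ℝ → ℝ :=
  if 1 < m then (Set.Ioi (1:ℝ)).indicator (fun r => r ^ (-m))
  else (Set.Ioo (0:ℝ) 1).indicator (fun r => -r ^ (-m))

lemma kap_meas (m : ℝ) : Measurable (kap m) := by
  unfold kap
  split_ifs
  · exact (by fun_prop : Measurable fun r : ℝ => r ^ (-m)).indicator measurableSet_Ioi
  · exact (by fun_prop : Measurable fun r : ℝ => -r ^ (-m)).indicator measurableSet_Ioo

lemma kap_int (m : ℝ) (hm : m ≠ 1) : Integrable (kap m) := by
  unfold kap
  split_ifs with h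
  · rw [integrable_indicator_iff measurableSet_Ioi]
    exact integrableOn_Ioi_rpow_of_lt (by linarith) one_pos
  · rw [integrable_indicator_iff measurableSet_Ioo]
    have h1 : m < 1 := lt_of_le_of_ne (not_lt.1 h) hm
    have := (intervalIntegral.intervalIntegrable_rpow' (a := 0) (b := 1) (r := -m) (by linarith)).1
    exact (this.mono_set Set.Ioo_subset_Ioc_self).neg

lemma kap_norm (m : ℝ) (hm : m ≠ 1) : ∫ r, |kap m r| = 1 / |m - 1| := by
  unfold kap
  split_ifs with h
  · have e : ∀ r, |(Set.Ioi (1:ℝ)).indicator (fun r : ℝ => r ^ (-m)) r|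
        = (Set.Ioi (1:ℝ)).indicator (fun r : ℝ => r ^ (-m)) r := by
      intro r
      apply abs_of_nonneg
      apply Set.indicator_nonneg
      intro x hx
      exact Real.rpow_nonneg (by linarith [Set.mem_Ioi.1 hx]) _
    simp_rw [e]
    rw [integral_indicator measurableSet_Ioi, integral_Ioi_rpow_of_lt (by linarith) one_pos,
      Real.one_rpow, abs_of_pos (by linarith), ← neg_div_neg_eq]
    congr 1 <;> ring
  · have h1 : m < 1 := lt_of_le_of_ne (not_lt.1 h) hm
    have e : ∀ r, |(Set.Ioo (0:ℝ) 1).indicator (fun r : ℝ => -r ^ (-m)) r|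
        = (Set.Ioo (0:ℝ) 1).indicator (fun r : ℝ => r ^ (-m)) r := by
      intro r
      by_cases hr : r ∈ Set.Ioo (0:ℝ) 1
      · simp only [Set.indicator_of_mem hr, abs_neg]
        exact abs_of_nonneg (Real.rpow_nonneg hr.1.le _)
      · simp [Set.indicator_of_notMem hr]
    simp_rw [e]
    rw [integral_indicator measurableSet_Ioo, ← integral_Ioc_eq_integral_Ioo,
      ← intervalIntegral.integral_of_le zero_le_one, integral_rpow (Or.inl (by linarith)),
      Real.one_rpow, Real.zero_rpow (by linarith), abs_of_neg (by linarith)]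
    congr 1 <;> ring

lemma kap_test (m : ℝ) (hm : m ≠ 1) (Φ : ℝ → ℝ) (hΦ : ContDiff ℝ 1 Φ) (hc : HasCompactSupport Φ) :
    ∫ r, (-(Φ r + r * deriv Φ r) + m * Φ r) * kap m r = Φ 1 := by
  have hd : ∀ r, HasDerivAt Φ (deriv Φ r) r := fun r =>
    ((hΦ.differentiable (by norm_num)) r).hasDerivAt
  have hdc : Continuous (deriv Φ) := hΦ.continuous_deriv le_rfl
  have hcont := hΦ.continuous
  have hcs : HasCompactSupport (fun r => (-(Φ r + r * deriv Φ r) + m * Φ r)) := by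
    have h2 : HasCompactSupport (fun r => r * deriv Φ r) := hc.deriv.mul_left
    have h3 : HasCompactSupport (fun r => m * Φ r) := hc.mul_left
    have h4 : HasCompactSupport (fun r => -(Φ r + r * deriv Φ r)) := (hc.add h2).neg
    exact h4.add h3
  obtain ⟨C, hC⟩ := hcs.exists_bound_of_continuous (by fun_prop)
  have hI : Integrable (fun r => (-(Φ r + r * deriv Φ r) + m * Φ r) * kap m r) :=
    (kap_int m hm).bdd_mul (by fun_prop) (Filter.Eventually.of_forall hC)
  unfold kap at *
  split_ifs at * with h
  · have e : (fun r => (-(Φ r + r * deriv Φ r) + m * Φ r) *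
        (Set.Ioi (1:ℝ)).indicator (fun r => r ^ (-m)) r) =
        (Set.Ioi (1:ℝ)).indicator (fun r => (-(Φ r + r * deriv Φ r) + m * Φ r) * r ^ (-m)) := by
      ext r; simp [Set.indicator]
    rw [e] at hI ⊢
    rw [integrable_indicator_iff measurableSet_Ioi] at hI
    rw [integral_indicator measurableSet_Ioi]
    have := integral_Ioi_of_hasDerivAt_of_tendsto (a := (1:ℝ)) (m := 0)
      (f := fun r => -(r ^ (1 - m) * Φ r))
      (f' := fun r => (-(Φ r + r * deriv Φ r) + m * Φ r) * r ^ (-m)) ?_ ?_ hI ?_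
    · rw [this]; simp
    · apply ContinuousAt.continuousWithinAt
      exact ((Real.continuousAt_rpow_const _ _ (Or.inl one_ne_zero)).mul hcont.continuousAt).neg
    · intro x hx
      have hx0 : 0 < x := by linarith [Set.mem_Ioi.1 hx]
      have := ((Real.hasDerivAt_rpow_const (p := 1 - m) (Or.inl hx0.ne')).mul (hd x)).neg
      refine this.congr_deriv ?_
      rw [show (1 - m - 1) = -m by ring, show x ^ (1 - m) = x * x ^ (-m) by
        rw [show 1 - m = 1 + -m by ring, Real.rpow_add hx0, Real.rpow_one]]
      ring
    · apply tendsto_const_nhds.congr'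
      have h0 := hasCompactSupport_iff_eventuallyEq.1 hc
      rw [Filter.coclosedCompact_eq_cocompact] at h0
      filter_upwards [atTop_le_cocompact h0] with x hx
      have hx' : Φ x = 0 := hx
      simp [hx']
  · have h1 : m < 1 := lt_of_le_of_ne (not_lt.1 h) hm
    have e : (fun r => (-(Φ r + r * deriv Φ r) + m * Φ r) *
        (Set.Ioo (0:ℝ) 1).indicator (fun r => -r ^ (-m)) r) =
        (Set.Ioo (0:ℝ) 1).indicator
          (fun r => (-(Φ r + r * deriv Φ r) + m * Φ r) * -r ^ (-m)) := by
      ext r; simp [Set.indicator]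
    rw [e] at hI ⊢
    rw [integrable_indicator_iff measurableSet_Ioo, ← integrableOn_Ioc_iff_integrableOn_Ioo,
      ← intervalIntegrable_iff_integrableOn_Ioc_of_le zero_le_one] at hI
    rw [integral_indicator measurableSet_Ioo, ← integral_Ioc_eq_integral_Ioo,
      ← intervalIntegral.integral_of_le zero_le_one]
    rw [intervalIntegral.integral_eq_sub_of_hasDerivAt_of_le zero_le_one
      (f := fun r => (r ^ (1 - m) * Φ r)) ?_ ?_ hI]
    · rw [Real.zero_rpow (by linarith)]; simp
    · apply Continuous.continuousOn
      exact (Real.continuous_rpow_const (by linarith)).mul hcont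
    · intro x hx
      have hx0 : 0 < x := hx.1
      have := ((Real.hasDerivAt_rpow_const (p := 1 - m) (Or.inl hx0.ne')).mul (hd x))
      refine this.congr_deriv ?_
      rw [show (1 - m - 1) = -m by ring, show x ^ (1 - m) = x * x ^ (-m) by
        rw [show 1 - m = 1 + -m by ring, Real.rpow_add hx0, Real.rpow_one]]
      ring

/-- dilation kernel operator -/
noncomputable def dil (n : ℝ) (κ : ℝ → ℝ) (g : ℝ → ℂ) : ℝ → ℂ :=
  fun p => ∫ s, ((κ ((p - n) / (s - n)) / |s - n| : ℝ) : ℂ) * g s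

lemma scale_int (n s : ℝ) (hs : s ≠ n) (F : ℝ → ℝ) :
    ∫ p, F ((p - n) / (s - n)) / |s - n| = ∫ r, F r := by
  have hs' : |s - n| ≠ 0 := by simpa [sub_eq_zero] using hs
  rw [integral_div, integral_sub_right_eq_self (fun p => F (p / (s - n))) n,
    Measure.integral_comp_div, smul_eq_mul]
  field_simp

lemma scale_integrable (n s : ℝ) (hs : s ≠ n) (F : ℝ → ℝ) (hF : Integrable F) :
    Integrable (fun p => F ((p - n) / (s - n)) / |s - n|) := by
  have hs' : s - n ≠ 0 := by simpa [sub_eq_zero] using hs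
  exact ((hF.comp_div hs').comp_sub_right n).div_const _

lemma scale_test (n s : ℝ) (hs : s ≠ n) (κ ψ : ℝ → ℝ) :
    ∫ p, ψ p * (κ ((p - n) / (s - n)) / |s - n|) = ∫ r, ψ (n + (s - n) * r) * κ r := by
  have hs' : s - n ≠ 0 := by simpa [sub_eq_zero] using hs
  rw [← scale_int n s hs (fun r => ψ (n + (s - n) * r) * κ r)]
  congr 1
  ext p
  rw [show n + (s - n) * ((p - n) / (s - n)) = p by field_simp; ring]
  ring

lemma ae_ne' (n : ℝ) : ∀ᵐ s : ℝ, s ≠ n := by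
  simp [ae_iff]

lemma dil_prod (n : ℝ) (κ : ℝ → ℝ) (hκm : Measurable κ) (hκ : Integrable κ)
    (g : ℝ → ℂ) (hg : Integrable g) :
    Integrable (fun z : ℝ × ℝ => ((κ ((z.1 - n) / (z.2 - n)) / |z.2 - n| : ℝ) : ℂ) * g z.2)
      (volume.prod volume) := by
  have hm : AEStronglyMeasurable
      (fun z : ℝ × ℝ => ((κ ((z.1 - n) / (z.2 - n)) / |z.2 - n| : ℝ) : ℂ) * g z.2)
      (volume.prod volume) := by
    refine AEStronglyMeasurable.mul ?_ hg.1.comp_snd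
    apply Measurable.aestronglyMeasurable
    fun_prop
  rw [integrable_prod_iff' hm]
  constructor
  · filter_upwards [ae_ne' n] with s hs
    exact ((scale_integrable n s hs κ hκ).ofReal).mul_const _
  · refine (hg.norm.const_mul (∫ r, |κ r|)).congr ?_
    filter_upwards [ae_ne' n] with s hs
    have := scale_int n s hs (fun r => |κ r|)
    rw [← this, ← integral_mul_const]
    congr 1; ext p
    simp

lemma dil_integrable (n : ℝ) (κ : ℝ → ℝ) (hκm : Measurable κ) (hκ : Integrable κ)
    (g : ℝ → ℂ) (hg : Integrable g) : Integrable (dil n κ g) :=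
  (dil_prod n κ hκm hκ g hg).integral_prod_left

lemma dil_norm (n : ℝ) (κ : ℝ → ℝ) (hκm : Measurable κ) (hκ : Integrable κ)
    (g : ℝ → ℂ) (hg : Integrable g) : ∫ p, ‖dil n κ g p‖ ≤ (∫ r, |κ r|) * ∫ s, ‖g s‖ := by
  have hp := dil_prod n κ hκm hκ g hg
  calc ∫ p, ‖dil n κ g p‖ ≤ ∫ p, ∫ s, ‖((κ ((p - n) / (s - n)) / |s - n| : ℝ) : ℂ) * g s‖ :=
        integral_mono (dil_integrable n κ hκm hκ g hg).norm hp.norm.integral_prod_left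
          (fun p => norm_integral_le_integral_norm _)
    _ = ∫ s, ∫ p, ‖((κ ((p - n) / (s - n)) / |s - n| : ℝ) : ℂ) * g s‖ :=
        integral_integral_swap hp.norm
    _ = ∫ s, (∫ r, |κ r|) * ‖g s‖ := by
        apply integral_congr_ae
        filter_upwards [ae_ne' n] with s hs
        have := scale_int n s hs (fun r => |κ r|)
        rw [← this, ← integral_mul_const]
        congr 1; ext p
        simp
    _ = _ := integral_const_mul _ _

lemma dil_test (n : ℝ) (κ : ℝ → ℝ) (hκm : Measurable κ) (hκ : Integrable κ)
    (g : ℝ → ℂ) (hg : Integrable g) (ψ : ℝ → ℝ) (hψ : Continuous ψ) (hc : HasCompactSupport ψ) :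
    ∫ p, (ψ p : ℂ) * dil n κ g p
      = ∫ s, ((∫ r, ψ (n + (s - n) * r) * κ r : ℝ) : ℂ) * g s := by
  have hp := dil_prod n κ hκm hκ g hg
  obtain ⟨C, hC⟩ := hc.exists_bound_of_continuous hψ
  have hp2 : Integrable (fun z : ℝ × ℝ => (ψ z.1 : ℂ) *
      (((κ ((z.1 - n) / (z.2 - n)) / |z.2 - n| : ℝ) : ℂ) * g z.2)) (volume.prod volume) := by
    refine hp.bdd_mul (c := C) ?_ (Filter.Eventually.of_forall fun z => ?_)
    · apply Continuous.aestronglyMeasurable; fun_prop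
    · simpa using hC z.1
  calc ∫ p, (ψ p : ℂ) * dil n κ g p = ∫ p, ∫ s, (ψ p : ℂ) *
      (((κ ((p - n) / (s - n)) / |s - n| : ℝ) : ℂ) * g s) := by
        congr 1; ext p; rw [dil, integral_const_mul]
    _ = ∫ s, ∫ p, (ψ p : ℂ) * (((κ ((p - n) / (s - n)) / |s - n| : ℝ) : ℂ) * g s) :=
        integral_integral_swap hp2
    _ = _ := by
        apply integral_congr_ae
        filter_upwards [ae_ne' n] with s hs
        rw [← scale_test n s hs, ← integral_complex_ofReal, ← integral_mul_const]
        congr 1; ext p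
        push_cast; ring

lemma tint {ψ : ℝ → ℝ} (hψ : Continuous ψ) (hc : HasCompactSupport ψ) {u : ℝ → ℂ}
    (hu : Integrable u) : Integrable (fun p => (ψ p : ℂ) * u p) := by
  obtain ⟨C, hC⟩ := hc.exists_bound_of_continuous hψ
  refine hu.bdd_mul (c := C) ?_ (Filter.Eventually.of_forall fun z => ?_)
  · apply Continuous.aestronglyMeasurable; fun_prop
  · simpa using hC z

/-- test functions -/
def Tst (φ : ℝ → ℝ) : Prop := ContDiff ℝ (⊤ : ℕ∞) φ ∧ HasCompactSupport φ

lemma Tst.hasDeriv {φ : ℝ → ℝ} (h : Tst φ) (p : ℝ) : HasDerivAt φ (deriv φ p) p :=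
  ((h.1.differentiable (by simp)) p).hasDerivAt

lemma Tst.deriv {φ : ℝ → ℝ} (h : Tst φ) : Tst (deriv φ) :=
  ⟨((contDiff_infty_iff_deriv (𝕜 := ℝ)).1 h.1).2, h.2.deriv⟩

lemma Tst.smul {φ : ℝ → ℝ} (h : Tst φ) (a : ℝ) : Tst (fun p => a * φ p) :=
  ⟨contDiff_const.mul h.1, h.2.mul_left⟩

lemma Tst.add {φ ψ : ℝ → ℝ} (h : Tst φ) (h' : Tst ψ) : Tst (fun p => φ p + ψ p) :=
  ⟨h.1.add h'.1, h.2.add h'.2⟩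

lemma Qdag_eq {φ : ℝ → ℝ} (h : Tst φ) (n p : ℝ) :
    Qdag n φ p = -(φ p + (p - n) * deriv φ p) := by
  have := ((hasDerivAt_id p).sub_const n).mul (h.hasDeriv p)
  have h2 : HasDerivAt (fun q => (q - n) * φ q) (1 * φ p + (p - n) * deriv φ p) p := this
  rw [Qdag, h2.deriv]; ring

lemma Tst.Qdag {φ : ℝ → ℝ} (h : Tst φ) (n : ℝ) : Tst (Qdag n φ) := by
  have : _root_.Qdag n φ = fun p => (-1) * (φ p + (p - n) * _root_.deriv φ p) := by
    ext p; rw [Qdag_eq h]; ring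
  rw [this]
  refine Tst.smul (h.add ⟨?_, h.deriv.2.mul_left⟩) _
  exact (contDiff_id.sub contDiff_const).mul h.deriv.1

lemma Pdag_eq (φ : ℝ → ℝ) : Pdag φ = Qdag 0 φ := by
  ext p; simp [Pdag, Qdag]

lemma kap_Q (n m s : ℝ) (hs : s ≠ n) (hm : m ≠ 1) {φ : ℝ → ℝ} (h : Tst φ) :
    ∫ r, (Qdag n φ (n + (s - n) * r) + m * φ (n + (s - n) * r)) * kap m r = φ s := by
  have hs' : s - n ≠ 0 := by simpa [sub_eq_zero] using hs
  have hd : ∀ r, HasDerivAt (fun r => φ (n + (s - n) * r))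
      ((s - n) * deriv φ (n + (s - n) * r)) r := by
    intro r
    have h1 : HasDerivAt (fun r : ℝ => n + (s - n) * r) (s - n) r := by
      simpa using ((hasDerivAt_id r).const_mul (s - n)).const_add n
    have := (h.hasDeriv (n + (s - n) * r)).comp r h1
    exact this.congr_deriv (mul_comm _ _)
  have := kap_test m hm (fun r => φ (n + (s - n) * r)) ?_ ?_
  · rw [show n + (s - n) * 1 = s by ring] at this
    rw [← this]
    congr 1; ext r
    rw [(hd r).deriv, Qdag_eq h]
    ring
  · have := h.1.of_le (m := 1) (by exact_mod_cast le_top)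
    exact this.comp (by fun_prop)
  · exact h.2.comp_homeomorph ((Homeomorph.mulLeft₀ (s - n) hs').trans (Homeomorph.addLeft n))

lemma solveQ (n m : ℝ) (hm : m ≠ 1) (g : ℝ → ℂ) (hg : Integrable g) (c : ℂ)
    (hc : n ≠ 0 ∨ c = 0) :
    ∃ z : ℝ → ℂ, Integrable z ∧ ∫ p, ‖z p‖ ≤ 1 / |m - 1| * ((∫ p, ‖g p‖) + ‖c‖) ∧
      ∀ φ, Tst φ → ∫ p, ((Qdag n φ p + m * φ p : ℝ) : ℂ) * z p
        = (∫ p, (φ p : ℂ) * g p) + c * (φ 0 : ℂ) := by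
  have km := kap_meas m
  have ki := kap_int m hm
  set k0 : ℝ → ℂ := fun p => ((kap m ((p - n) / (0 - n)) / |0 - n| : ℝ) : ℂ) * c with hk0
  have hk : Integrable k0 ∧ ∫ p, ‖k0 p‖ ≤ 1 / |m - 1| * ‖c‖ ∧
      ∀ φ, Tst φ → ∫ p, ((Qdag n φ p + m * φ p : ℝ) : ℂ) * k0 p = c * (φ 0 : ℂ) := by
    rcases hc with hn | rfl
    · have hn' : (0:ℝ) ≠ n := hn.symm
      refine ⟨((scale_integrable n 0 hn' _ ki).ofReal).mul_const c, le_of_eq ?_, ?_⟩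
      · rw [← kap_norm m hm, ← scale_int n 0 hn' (fun r => |kap m r|), ← integral_mul_const]
        congr 1; ext p
        simp [hk0]
      · intro φ hφ
        rw [← kap_Q n m 0 hn' hm hφ,
          ← scale_test n 0 hn' (kap m) (fun p => Qdag n φ p + m * φ p),
          ← integral_complex_ofReal, ← integral_const_mul]
        congr 1; ext p
        simp only [hk0]
        push_cast; ring
    · simp [hk0]
  obtain ⟨hk1, hk2, hk3⟩ := hk
  have hd := dil_integrable n _ km ki g hg
  refine ⟨fun p => dil n (kap m) g p + k0 p, hd.add hk1, ?_, ?_⟩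
  · calc ∫ p, ‖dil n (kap m) g p + k0 p‖ ≤ ∫ p, (‖dil n (kap m) g p‖ + ‖k0 p‖) :=
          integral_mono (hd.add hk1).norm (hd.norm.add hk1.norm) (fun p => norm_add_le _ _)
      _ = (∫ p, ‖dil n (kap m) g p‖) + ∫ p, ‖k0 p‖ := integral_add hd.norm hk1.norm
      _ ≤ _ := by
        have := dil_norm n _ km ki g hg
        rw [kap_norm m hm] at this
        rw [mul_add]; exact add_le_add this hk2
  · intro φ hφ
    have ht : Tst (fun p => Qdag n φ p + m * φ p) := (hφ.Qdag n).add (hφ.smul m)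
    simp_rw [mul_add]
    rw [integral_add (tint ht.1.continuous ht.2 hd) (tint ht.1.continuous ht.2 hk1), hk3 φ hφ,
      dil_test n _ km ki g hg (fun p => Qdag n φ p + m * φ p) ht.1.continuous ht.2]
    congr 1
    apply integral_congr_ae
    filter_upwards [ae_ne' n] with s hs
    rw [kap_Q n m s hs hm hφ]

lemma kap_zero : kap 0 = (Set.Ioo (0:ℝ) 1).indicator (fun _ => -1) := by
  simp [kap]

/-- inverse of `P` -/
lemma dil_P (w : ℝ → ℂ) (hw : Integrable w) :
    Integrable (dil 0 (kap 0) w) ∧ ∫ p, ‖dil 0 (kap 0) w p‖ ≤ ∫ p, ‖w p‖ ∧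
    (∀ φ, Tst φ → ∫ p, ((Pdag φ p : ℝ) : ℂ) * dil 0 (kap 0) w p = ∫ p, (φ p : ℂ) * w p) ∧
    (∀ φ, Tst φ → ∫ p, ((deriv φ p : ℝ) : ℂ) * dil 0 (kap 0) w p
      = ∫ s, ((-((φ s - φ 0) / s) : ℝ) : ℂ) * w s) := by
  have km := kap_meas 0
  have ki := kap_int 0 (by norm_num)
  refine ⟨dil_integrable 0 _ km ki w hw, ?_, ?_, ?_⟩
  · have := dil_norm 0 _ km ki w hw
    rw [kap_norm 0 (by norm_num)] at this
    simpa using this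
  · intro φ hφ
    rw [Pdag_eq, dil_test 0 _ km ki w hw _ (hφ.Qdag 0).1.continuous (hφ.Qdag 0).2]
    apply integral_congr_ae
    filter_upwards [ae_ne' 0] with s hs
    have := kap_Q 0 0 s hs (by norm_num) hφ
    simp only [zero_mul, add_zero] at this
    rw [this]
  · intro φ hφ
    rw [dil_test 0 _ km ki w hw _ hφ.deriv.1.continuous hφ.deriv.2]
    apply integral_congr_ae
    filter_upwards [ae_ne' 0] with s hs
    congr 2
    rw [kap_zero]
    have e : (fun r => deriv φ (0 + (s - 0) * r) * (Set.Ioo (0:ℝ) 1).indicator (fun _ => -1) r) =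
        (Set.Ioo (0:ℝ) 1).indicator (fun r => - deriv φ (s * r)) := by
      ext r; simp [Set.indicator]
    rw [e, integral_indicator measurableSet_Ioo, ← integral_Ioc_eq_integral_Ioo,
      ← intervalIntegral.integral_of_le zero_le_one]
    rw [intervalIntegral.integral_eq_sub_of_hasDerivAt (f := fun r => - (φ (s * r) / s))]
    · simp only [mul_one, mul_zero]; ring
    · intro r _
      have h1 : HasDerivAt (fun r : ℝ => s * r) s r := by
        simpa using ((hasDerivAt_id r).const_mul s)
      have := (((hφ.hasDeriv (s * r)).comp r h1).div_const s).neg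
      exact this.congr_deriv (by field_simp)
    · apply Continuous.intervalIntegrable
      have := hφ.deriv.1.continuous
      fun_prop

lemma dil_supp (w : ℝ → ℂ) (a : ℝ) (hw : ∀ s, a < |s| → w s = 0) (p : ℝ) (hp : a < |p|) :
    dil 0 (kap 0) w p = 0 := by
  unfold dil
  rw [kap_zero]
  have : ∀ s, (((Set.Ioo (0:ℝ) 1).indicator (fun _ => (-1:ℝ)) ((p - 0) / (s - 0)) / |s - 0| : ℝ) : ℂ)
      * w s = 0 := by
    intro s
    by_cases h : (p - 0) / (s - 0) ∈ Set.Ioo (0:ℝ) 1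
    · rw [hw s, mul_zero]
      simp only [sub_zero] at h
      have h2 : |p / s| < 1 := by rw [abs_of_pos h.1]; exact h.2
      have hs : s ≠ 0 := by rintro rfl; simp at h
      rw [abs_div, div_lt_one (abs_pos.2 hs)] at h2
      linarith
    · rw [Set.indicator_of_notMem h]; simp
  simp_rw [this]; simp

lemma step1 (n m : ℝ) (hn : n ≠ 0) (hm : m ≠ 1) (w : ℝ → ℂ) (hw : Integrable w)
    (hs : ∀ s, |n| / 2 < |s| → w s = 0) :
    ∃ z : ℝ → ℂ, Integrable z ∧ ∫ p, ‖z p‖ ≤ 4 * ∫ p, ‖w p‖ ∧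
      ∀ φ, Tst φ → ∫ p, ((Qdag n φ p + m * φ p : ℝ) : ℂ) * z p
        = n * ∫ p, ((deriv φ p : ℝ) : ℂ) * dil 0 (kap 0) w p := by
  obtain ⟨hu, hun, -, -⟩ := dil_P w hw
  have hus := dil_supp w _ hs
  set u := dil 0 (kap 0) w
  have hnp := abs_pos.2 hn
  have key : ∀ p, u p ≠ 0 → |n| / 2 ≤ |p - n| := by
    intro p hp
    have : |p| ≤ |n| / 2 := by
      by_contra h
      exact hp (hus p (not_le.1 h))
    have h2 := abs_sub_abs_le_abs_sub n p
    rw [abs_sub_comm] at h2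
    linarith
  set v : ℝ → ℂ := fun p => ((-n / (p - n) : ℝ) : ℂ) * u p with hv
  have hvb : ∀ p, ‖v p‖ ≤ 2 * ‖u p‖ := by
    intro p
    by_cases hp : u p = 0
    · simp [hv, hp]
    · have h1 := key p hp
      simp only [hv, norm_mul]
      gcongr
      rw [Complex.norm_real, Real.norm_eq_abs, abs_div, abs_neg, div_le_iff₀ (by linarith)]
      linarith
  have hvi : Integrable v := by
    refine (hu.norm.const_mul 2).mono' ?_ (Filter.Eventually.of_forall hvb)
    refine AEStronglyMeasurable.mul ?_ hu.1
    apply Measurable.aestronglyMeasurable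
    fun_prop
  have hvn : ∫ p, ‖v p‖ ≤ 2 * ∫ p, ‖u p‖ := by
    rw [← integral_const_mul]
    exact integral_mono hvi.norm (hu.norm.const_mul 2) hvb
  obtain ⟨y, hy, hyn, hyt⟩ := solveQ n m hm v hvi 0 (Or.inr rfl)
  refine ⟨fun p => v p - ((m - 1 : ℝ) : ℂ) * y p, hvi.sub (hy.const_mul _), ?_, ?_⟩
  · have hm1 : 0 < |m - 1| := abs_pos.2 (sub_ne_zero.2 hm)
    calc ∫ p, ‖v p - ((m - 1 : ℝ) : ℂ) * y p‖ ≤ ∫ p, (‖v p‖ + |m - 1| * ‖y p‖) := by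
          refine integral_mono (hvi.sub (hy.const_mul _)).norm
            (hvi.norm.add (hy.norm.const_mul _)) (fun p => ?_)
          refine (norm_sub_le _ _).trans ?_
          rw [norm_mul ((m - 1 : ℝ) : ℂ) (y p), Complex.norm_real (m - 1), Real.norm_eq_abs]
      _ = (∫ p, ‖v p‖) + |m - 1| * ∫ p, ‖y p‖ := by
          rw [integral_add hvi.norm (hy.norm.const_mul _), integral_const_mul]
      _ ≤ (∫ p, ‖v p‖) + |m - 1| * (1 / |m - 1| * ((∫ p, ‖v p‖) + ‖(0:ℂ)‖)) := by gcongr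
      _ = 2 * ∫ p, ‖v p‖ := by rw [norm_zero]; field_simp; ring
      _ ≤ _ := by linarith
  · intro φ hφ
    have ht : Tst (fun p => Qdag n φ p + m * φ p) := (hφ.Qdag n).add (hφ.smul m)
    have e : ∀ p, ((Qdag n φ p + m * φ p : ℝ) : ℂ) * (v p - ((m - 1 : ℝ) : ℂ) * y p)
        = ((Qdag n φ p + m * φ p : ℝ) : ℂ) * v p
          - ((m - 1 : ℝ) : ℂ) * (((Qdag n φ p + m * φ p : ℝ) : ℂ) * y p) := fun p => by ring
    simp_rw [e]
    rw [integral_sub (tint ht.1.continuous ht.2 hvi)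
      ((tint ht.1.continuous ht.2 hy).const_mul _), integral_const_mul, hyt φ hφ, zero_mul,
      add_zero, ← integral_const_mul, ← integral_sub (tint ht.1.continuous ht.2 hvi)
      ((tint hφ.1.continuous hφ.2 hvi).const_mul _), ← integral_const_mul]
    congr 1; ext p
    by_cases hp : u p = 0
    · simp [hv, hp]
    · have h1 := key p hp
      have h2 : p - n ≠ 0 := by
        intro h; rw [h, abs_zero] at h1; linarith
      have h3 : (p : ℂ) - n ≠ 0 := by exact_mod_cast h2
      rw [Qdag_eq hφ]
      simp only [hv]
      push_cast
      field_simp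
      ring

lemma step2 (n m : ℝ) (hn : n ≠ 0) (hm : m ≠ 1) (w : ℝ → ℂ) (hw : Integrable w)
    (hs : ∀ s, |s| ≤ |n| / 2 → w s = 0) :
    ∃ z : ℝ → ℂ, Integrable z ∧ ∫ p, ‖z p‖ ≤ 1 / |m - 1| * (4 * ∫ p, ‖w p‖) ∧
      ∀ φ, Tst φ → ∫ p, ((Qdag n φ p + m * φ p : ℝ) : ℂ) * z p
        = n * ∫ p, ((deriv φ p : ℝ) : ℂ) * dil 0 (kap 0) w p := by
  obtain ⟨hu, hun, -, hud⟩ := dil_P w hw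
  have hnp := abs_pos.2 hn
  set v : ℝ → ℂ := fun p => ((-n / p : ℝ) : ℂ) * w p with hv
  have hvb : ∀ p, ‖v p‖ ≤ 2 * ‖w p‖ := by
    intro p
    by_cases hp : w p = 0
    · simp [hv, hp]
    · have h1 : |n| / 2 < |p| := by
        by_contra h
        exact hp (hs p (not_lt.1 h))
      simp only [hv, norm_mul]
      gcongr
      rw [Complex.norm_real, Real.norm_eq_abs, abs_div, abs_neg, div_le_iff₀ (by linarith)]
      linarith
  have hvi : Integrable v := by
    refine (hw.norm.const_mul 2).mono' ?_ (Filter.Eventually.of_forall hvb)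
    refine AEStronglyMeasurable.mul ?_ hw.1
    apply Measurable.aestronglyMeasurable
    fun_prop
  have hvn : ∫ p, ‖v p‖ ≤ 2 * ∫ p, ‖w p‖ := by
    rw [← integral_const_mul]
    exact integral_mono hvi.norm (hw.norm.const_mul 2) hvb
  obtain ⟨y, hy, hyn, hyt⟩ := solveQ n m hm v hvi (-∫ p, v p) (Or.inl hn)
  refine ⟨y, hy, hyn.trans ?_, ?_⟩
  · rw [norm_neg]
    have := norm_integral_le_integral_norm (μ := volume) v
    gcongr
    linarith
  · intro φ hφ
    rw [hyt φ hφ, hud φ hφ, ← integral_const_mul, neg_mul, ← integral_mul_const, ← sub_eq_add_neg,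
      ← integral_sub (tint hφ.1.continuous hφ.2 hvi) (hvi.mul_const _)]
    congr 1; ext p
    simp only [hv]
    push_cast
    ring

lemma step (n m : ℝ) (hn : n ≠ 0) (hm : 1 ≤ |m - 1|) (w : ℝ → ℂ) (hw : Integrable w) :
    ∃ u z : ℝ → ℂ, Integrable u ∧ Integrable z ∧ ∫ p, ‖u p‖ ≤ ∫ p, ‖w p‖ ∧
      ∫ p, ‖z p‖ ≤ 4 * ∫ p, ‖w p‖ ∧
      (∀ φ, Tst φ → ∫ p, ((Pdag φ p : ℝ) : ℂ) * u p = ∫ p, (φ p : ℂ) * w p) ∧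
      ∀ φ, Tst φ → ∫ p, ((Qdag n φ p + m * φ p : ℝ) : ℂ) * z p
        = n * ∫ p, ((deriv φ p : ℝ) : ℂ) * u p := by
  have hm1 : m ≠ 1 := by rintro rfl; norm_num at hm
  set S : Set ℝ := {s | |s| ≤ |n| / 2} with hS
  have hSm : MeasurableSet S := measurableSet_le (by fun_prop) (by fun_prop)
  set w1 := S.indicator w with hw1
  set w2 := Sᶜ.indicator w with hw2
  have i1 : Integrable w1 := hw.indicator hSm
  have i2 : Integrable w2 := hw.indicator hSm.compl
  have hsum : ∀ p, w1 p + w2 p = w p := fun p => Set.indicator_self_add_compl_apply S w p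
  have hnorm : (∫ p, ‖w1 p‖) + ∫ p, ‖w2 p‖ = ∫ p, ‖w p‖ := by
    rw [← integral_add i1.norm i2.norm]
    congr 1; ext p
    by_cases hp : p ∈ S <;> simp [hw1, hw2, hp]
  obtain ⟨z1, hz1, hz1n, hz1t⟩ := step1 n m hn hm1 w1 i1 (fun s hs => by
    apply Set.indicator_of_notMem; simpa [hS] using hs)
  obtain ⟨z2, hz2, hz2n, hz2t⟩ := step2 n m hn hm1 w2 i2 (fun s hs => by
    apply Set.indicator_of_notMem; simpa [hS] using hs)
  obtain ⟨hu1, hu1n, hu1t, -⟩ := dil_P w1 i1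
  obtain ⟨hu2, hu2n, hu2t, -⟩ := dil_P w2 i2
  have hz2n' : ∫ p, ‖z2 p‖ ≤ 4 * ∫ p, ‖w2 p‖ := by
    refine hz2n.trans ?_
    have h0 : 0 ≤ ∫ p, ‖w2 p‖ := integral_nonneg fun _ => norm_nonneg _
    have h1 : 1 / |m - 1| ≤ 1 := by rw [div_le_one (by linarith)]; exact hm
    nlinarith
  have tri : ∀ a b : ℝ → ℂ, Integrable a → Integrable b →
      ∫ p, ‖a p + b p‖ ≤ (∫ p, ‖a p‖) + ∫ p, ‖b p‖ := by
    intro a b ha hb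
    rw [← integral_add ha.norm hb.norm]
    exact integral_mono (ha.add hb).norm (ha.norm.add hb.norm) (fun p => norm_add_le _ _)
  refine ⟨fun p => dil 0 (kap 0) w1 p + dil 0 (kap 0) w2 p, fun p => z1 p + z2 p,
    hu1.add hu2, hz1.add hz2, ?_, ?_, ?_, ?_⟩
  · refine (tri _ _ hu1 hu2).trans ?_
    linarith
  · refine (tri _ _ hz1 hz2).trans ?_
    linarith
  · intro φ hφ
    have ht : Tst (Pdag φ) := by rw [Pdag_eq]; exact hφ.Qdag 0
    simp_rw [mul_add, ← hsum]
    rw [integral_add (tint ht.1.continuous ht.2 hu1) (tint ht.1.continuous ht.2 hu2),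
      hu1t φ hφ, hu2t φ hφ, ← integral_add (tint hφ.1.continuous hφ.2 i1)
      (tint hφ.1.continuous hφ.2 i2)]
    simp_rw [mul_add]
  · intro φ hφ
    have ht : Tst (fun p => Qdag n φ p + m * φ p) := (hφ.Qdag n).add (hφ.smul m)
    simp_rw [mul_add]
    rw [integral_add (tint ht.1.continuous ht.2 hz1) (tint ht.1.continuous ht.2 hz2),
      hz1t φ hφ, hz2t φ hφ, integral_add (tint hφ.deriv.1.continuous hφ.deriv.2 hu1)
      (tint hφ.deriv.1.continuous hφ.deriv.2 hu2), mul_add]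

lemma tsum_L1 (u : ℕ → ℝ → ℂ) (hu : ∀ k, Integrable (u k))
    (hs : Summable fun k => ∫ p, ‖u k p‖) :
    Integrable (fun p => ∑' k, u k p) ∧ ∫ p, ‖∑' k, u k p‖ ≤ ∑' k, ∫ p, ‖u k p‖ := by
  have h1 : ∫⁻ p, ∑' k, ‖u k p‖ₑ = ENNReal.ofReal (∑' k, ∫ p, ‖u k p‖) := by
    rw [lintegral_tsum (fun k => (hu k).1.enorm), ENNReal.ofReal_tsum_of_nonneg
      (fun k => integral_nonneg fun _ => norm_nonneg _) hs]
    congr 1; ext k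
    exact (ofReal_integral_norm_eq_lintegral_enorm (hu k)).symm
  have hae : ∀ᵐ p, Summable fun k => u k p := by
    have h2 : ∀ᵐ p, ∑' k, ‖u k p‖ₑ < ⊤ := by
      refine ae_lt_top' (AEMeasurable.ennreal_tsum fun k => (hu k).1.enorm) ?_
      rw [h1]; exact ENNReal.ofReal_ne_top
    filter_upwards [h2] with p hp
    have := ENNReal.tsum_coe_ne_top_iff_summable.1 hp.ne
    exact Summable.of_nnnorm this
  have hm : AEStronglyMeasurable (fun p => ∑' k, u k p) volume := by
    refine aestronglyMeasurable_of_tendsto_ae Filter.atTop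
      (f := fun N p => ∑ k ∈ Finset.range N, u k p) (fun N => ?_) ?_
    · exact Finset.aestronglyMeasurable_fun_sum _ (fun k _ => (hu k).1)
    · filter_upwards [hae] with p hp
      exact hp.hasSum.tendsto_sum_nat
  have hle : ∫⁻ p, ‖∑' k, u k p‖ₑ ≤ ENNReal.ofReal (∑' k, ∫ p, ‖u k p‖) := by
    rw [← h1]
    exact lintegral_mono fun p => enorm_tsum_le_tsum_enorm
  have hi : Integrable (fun p => ∑' k, u k p) := ⟨hm, hle.trans_lt ENNReal.ofReal_lt_top⟩
  refine ⟨hi, ?_⟩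
  rw [← ofReal_integral_norm_eq_lintegral_enorm hi] at hle
  exact (ENNReal.ofReal_le_ofReal_iff
    (tsum_nonneg fun k => integral_nonneg fun _ => norm_nonneg _)).1 hle

/-- The second-order factor of the adjoint. -/
noncomputable def Bop (n a b : ℝ) (φ : ℝ → ℝ) : ℝ → ℝ := fun q =>
  Qdag n (fun q' => Qdag n φ q' + a * φ q') q + b * (Qdag n φ q + a * φ q)

lemma Tst.Bop {φ : ℝ → ℝ} (h : Tst φ) (n a b : ℝ) : Tst (Bop n a b φ) := by
  have ht : Tst (fun p => _root_.Qdag n φ p + a * φ p) := (h.Qdag n).add (h.smul a)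
  exact (ht.Qdag n).add (ht.smul b)

lemma Aop_eq (μ : ℝ) (n : ℤ) {φ : ℝ → ℝ} (h : Tst φ) (p : ℝ) :
    Aop μ n φ p = Pdag (Bop n ((2 - (n : ℝ)) * μ) ((2 + (n : ℝ)) * μ) φ) p
      - (2 * μ - 1) * (n * deriv φ p) := by
  unfold Aop Bop
  rw [Pdag_eq φ, Qdag_eq h, Qdag_eq h]
  ring

lemma fullstep (μ : ℝ) (hμ : 1 / 2 < μ) (n : ℤ) (hn : (n : ℝ) ≠ 0)
    (ha : 1 ≤ |(2 - (n : ℝ)) * μ - 1|) (hb : 8 * (2 * μ - 1) ≤ |(2 + (n : ℝ)) * μ - 1|)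
    (w : ℝ → ℂ) (hw : Integrable w) :
    ∃ u w' : ℝ → ℂ, Integrable u ∧ ∫ p, ‖u p‖ ≤ ∫ p, ‖w p‖ ∧ Integrable w' ∧
      ∫ p, ‖w' p‖ ≤ 1 / 2 * ∫ p, ‖w p‖ ∧
      ∀ φ, Tst φ → ∫ p, ((Aop μ n φ p : ℝ) : ℂ) * u p =
        (∫ p, ((Bop n ((2 - (n : ℝ)) * μ) ((2 + (n : ℝ)) * μ) φ p : ℝ) : ℂ) * w p) -
        ∫ p, ((Bop n ((2 - (n : ℝ)) * μ) ((2 + (n : ℝ)) * μ) φ p : ℝ) : ℂ) * w' p := by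
  obtain ⟨u, z, hu, hz, hun, hzn, hut, hzt⟩ := step n _ hn ha w hw
  have hbpos : 0 < |(2 + (n : ℝ)) * μ - 1| := by linarith
  have hb1 : (2 + (n : ℝ)) * μ ≠ 1 := by
    intro h; rw [h] at hbpos; simp at hbpos
  obtain ⟨w', hw', hwn, hwt⟩ := solveQ n _ hb1 (fun p => ((2 * μ - 1 : ℝ) : ℂ) * z p)
    (hz.const_mul _) 0 (Or.inr rfl)
  refine ⟨u, w', hu, hun, hw', hwn.trans ?_, ?_⟩
  · simp only [norm_mul, integral_const_mul, Complex.norm_real, norm_zero, add_zero,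
      Real.norm_eq_abs]
    rw [abs_of_pos (by linarith : 0 < 2 * μ - 1), one_div_mul_eq_div, div_le_iff₀ hbpos]
    have h0 : 0 ≤ ∫ p, ‖w p‖ := integral_nonneg fun _ => norm_nonneg _
    have h1 : (2 * μ - 1) * ∫ p, ‖z p‖ ≤ (2 * μ - 1) * (4 * ∫ p, ‖w p‖) :=
      mul_le_mul_of_nonneg_left hzn (by linarith)
    have h2 := mul_le_mul_of_nonneg_right hb h0
    linarith
  · intro φ hφ
    have hB := hφ.Bop n ((2 - (n : ℝ)) * μ) ((2 + (n : ℝ)) * μ)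
    have hPB : Tst (Pdag (Bop n ((2 - (n : ℝ)) * μ) ((2 + (n : ℝ)) * μ) φ)) := by
      rw [Pdag_eq]; exact hB.Qdag 0
    have ht : Tst (fun p => Qdag n φ p + (2 - (n : ℝ)) * μ * φ p) := (hφ.Qdag n).add (hφ.smul _)
    have e2 := hwt _ ht
    have e3 : ∀ p, ((Qdag n φ p + (2 - (n : ℝ)) * μ * φ p : ℝ) : ℂ) * (((2 * μ - 1 : ℝ) : ℂ) * z p)
      = ((2 * μ - 1 : ℝ) : ℂ) * (((Qdag n φ p + (2 - (n : ℝ)) * μ * φ p : ℝ) : ℂ) * z p) :=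
      fun p => by ring
    simp_rw [e3] at e2
    rw [integral_const_mul, hzt φ hφ, zero_mul, add_zero] at e2
    have e4 : ∀ p, ((Aop μ n φ p : ℝ) : ℂ) * u p =
      ((Pdag (Bop n ((2 - (n : ℝ)) * μ) ((2 + (n : ℝ)) * μ) φ) p : ℝ) : ℂ) * u p
      - ((2 * μ - 1 : ℝ) : ℂ) * (((n : ℝ) : ℂ) * (((deriv φ p : ℝ) : ℂ) * u p)) := fun p => by
      rw [Aop_eq μ n hφ]; push_cast; ring
    simp_rw [e4]
    rw [integral_sub (tint hPB.1.continuous hPB.2 hu)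
      (((tint hφ.deriv.1.continuous hφ.deriv.2 hu).const_mul _).const_mul _),
      integral_const_mul, integral_const_mul, hut _ hB, ← e2]
    rfl

lemma largen (μ : ℝ) (hμ : 1 / 2 < μ) (n : ℤ) (hn : (n : ℝ) ≠ 0)
    (ha : 1 ≤ |(2 - (n : ℝ)) * μ - 1|) (hb : 8 * (2 * μ - 1) ≤ |(2 + (n : ℝ)) * μ - 1|)
    (g : ℝ → ℂ) (hg : Integrable g) (c : ℂ) :
    ∃ h : ℝ → ℂ, Integrable h ∧
      ∫ p, ‖h p‖ ≤ 2 * (1 / |(2 + (n : ℝ)) * μ - 1| * (1 / |(2 - (n : ℝ)) * μ - 1| *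
        ((∫ p, ‖g p‖) + ‖c‖))) ∧
      ∀ φ, Tst φ → ∫ p, ((Aop μ n φ p : ℝ) : ℂ) * h p
        = (∫ p, ((φ p : ℝ) : ℂ) * g p) + c * ((φ 0 : ℝ) : ℂ) := by
  have hbpos : 0 < |(2 + (n : ℝ)) * μ - 1| := by linarith
  have hb1 : (2 + (n : ℝ)) * μ ≠ 1 := by
    intro h; rw [h] at hbpos; simp at hbpos
  have ha1 : (2 - (n : ℝ)) * μ ≠ 1 := by
    intro h; rw [h] at ha; norm_num at ha
  obtain ⟨z, hz, hzn, hzt⟩ := solveQ n _ ha1 g hg c (Or.inl hn)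
  obtain ⟨w, hw, hwn, hwt⟩ := solveQ n _ hb1 z hz 0 (Or.inr rfl)
  have hstep := fullstep μ hμ n hn ha hb
  choose U W' hU hUn hW' hWn hA using hstep
  let W : ℕ → {w : ℝ → ℂ // Integrable w} := fun k =>
    Nat.rec ⟨w, hw⟩ (fun _ x => ⟨W' x.1 x.2, hW' x.1 x.2⟩) k
  let u : ℕ → ℝ → ℂ := fun k => U (W k).1 (W k).2
  have hui : ∀ k, Integrable (u k) := fun k => hU _ _
  have hWk : ∀ k, ∫ p, ‖(W k).1 p‖ ≤ (1 / 2) ^ k * ∫ p, ‖w p‖ := by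
    intro k
    induction k with
    | zero => simp [W]
    | succ k ih =>
      refine (hWn (W k).1 (W k).2).trans ?_
      rw [pow_succ]
      linarith
  have huk : ∀ k, ∫ p, ‖u k p‖ ≤ (1 / 2) ^ k * ∫ p, ‖w p‖ := fun k => (hUn _ _).trans (hWk k)
  have hgeo : HasSum (fun k : ℕ => (1 / 2 : ℝ) ^ k * ∫ p, ‖w p‖) (2 * ∫ p, ‖w p‖) :=
    hasSum_geometric_two.mul_right _
  have hsum : Summable fun k => ∫ p, ‖u k p‖ :=
    Summable.of_nonneg_of_le (fun k => integral_nonneg fun _ => norm_nonneg _) huk hgeo.summable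
  obtain ⟨hti, htn⟩ := tsum_L1 u hui hsum
  refine ⟨fun p => ∑' k, u k p, hti, ?_, ?_⟩
  · refine htn.trans ((hsum.tsum_le_tsum huk hgeo.summable).trans ?_)
    rw [hgeo.tsum_eq]
    rw [norm_zero, add_zero] at hwn
    have := mul_le_mul_of_nonneg_left hzn (one_div_pos.2 hbpos).le
    linarith
  · intro φ hφ
    have hB := hφ.Bop n ((2 - (n : ℝ)) * μ) ((2 + (n : ℝ)) * μ)
    have hAT : Continuous (Aop μ n φ) ∧ HasCompactSupport (Aop μ n φ) := by
      have : Aop μ n φ = fun p => Pdag (Bop n ((2 - (n : ℝ)) * μ) ((2 + (n : ℝ)) * μ) φ) p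
          + (-(2 * μ - 1) * n) * deriv φ p := by
        ext p; rw [Aop_eq μ n hφ]; ring
      have ht : Tst (Aop μ n φ) := by
        rw [this, Pdag_eq]
        exact (hB.Qdag 0).add (hφ.deriv.smul _)
      exact ⟨ht.1.continuous, ht.2⟩
    obtain ⟨C, hC⟩ := hAT.2.exists_bound_of_continuous hAT.1
    obtain ⟨D, hD⟩ := hB.2.exists_bound_of_continuous hB.1.continuous
    set a : ℕ → ℂ := fun k =>
      ∫ p, ((Bop n ((2 - (n : ℝ)) * μ) ((2 + (n : ℝ)) * μ) φ p : ℝ) : ℂ) * (W k).1 p with hadef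
    have h1 : HasSum (fun k => ∫ p, ((Aop μ n φ p : ℝ) : ℂ) * u k p)
        (∫ p, ∑' k, ((Aop μ n φ p : ℝ) : ℂ) * u k p) := by
      apply hasSum_integral_of_summable_integral_norm
      · intro k; exact tint hAT.1 hAT.2 (hui k)
      · refine Summable.of_nonneg_of_le (fun k => integral_nonneg fun _ => norm_nonneg _) ?_
          (hsum.mul_left C)
        intro k
        rw [← integral_const_mul]
        refine integral_mono (tint hAT.1 hAT.2 (hui k)).norm ((hui k).norm.const_mul C) ?_
        intro p
        simp only [norm_mul]
        gcongr
        simpa using hC p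
    have h2 : ∀ k, ∫ p, ((Aop μ n φ p : ℝ) : ℂ) * u k p = a k - a (k + 1) :=
      fun k => hA (W k).1 (W k).2 φ hφ
    have h3 : Filter.Tendsto a Filter.atTop (nhds 0) := by
      have hb : ∀ k, ‖a k‖ ≤ D * ((1 / 2) ^ k * ∫ p, ‖w p‖) := by
        intro k
        have hD0 : 0 ≤ D := (norm_nonneg _).trans (hD 0)
        refine (norm_integral_le_integral_norm _).trans ?_
        refine le_trans ?_ (mul_le_mul_of_nonneg_left (hWk k) hD0)
        rw [← integral_const_mul]
        refine integral_mono (tint hB.1.continuous hB.2 (W k).2).norm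
          ((W k).2.norm.const_mul D) ?_
        intro p
        simp only [norm_mul]
        gcongr
        simpa using hD p
      refine squeeze_zero_norm hb ?_
      simpa using hgeo.summable.tendsto_atTop_zero.const_mul D
    have h4 := h1.tendsto_sum_nat
    simp_rw [h2] at h4
    simp_rw [Finset.sum_range_sub'] at h4
    have h5 := tendsto_nhds_unique h4 (h3.const_sub (a 0))
    simp_rw [tsum_mul_left] at h5
    rw [h5, sub_zero, ← hzt φ hφ]
    have ht : Tst (fun p => Qdag n φ p + (2 - (n : ℝ)) * μ * φ p) := (hφ.Qdag n).add (hφ.smul _)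
    have e2 := hwt _ ht
    rw [zero_mul, add_zero] at e2
    exact e2

/-- inversion estimate `‖L_n⁻¹‖ ≲ (1+n²)⁻¹` for the linearized self-similar
Euler operator on the space `L¹(ℝ) + ℂ·δ₀` of finite measures, for the mode `n = 0` and all
sufficiently large `|n|`.  Measures `g·λ + c·δ₀` and `h·λ + d·δ₀` are encoded by the pairs
`(g, c)`, `(h, d)`; their total variation norms are `∫‖g‖ + ‖c‖` resp. `∫‖h‖ + ‖d‖`; the
distributional equation `L_n u = f` means `∫ A_nφ du = ∫ φ df` for all test functions `φ`. -/
theorem Ln_inversion_estimate (μ : ℝ) (hμ : 1 / 2 < μ) :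
    ∃ (N₀ : ℕ) (C : ℝ), 0 ≤ C ∧
      ∀ n : ℤ, (n = 0 ∨ N₀ ≤ n.natAbs) →
        ∀ g : ℝ → ℂ, Integrable g → ∀ c : ℂ,
          ∃ h : ℝ → ℂ, ∃ d : ℂ, Integrable h ∧
            (∫ p, ‖h p‖) + ‖d‖ ≤ C * (1 + (n : ℝ) ^ 2)⁻¹ * ((∫ p, ‖g p‖) + ‖c‖) ∧
            ∀ φ : ℝ → ℝ, ContDiff ℝ (⊤ : ℕ∞) φ → HasCompactSupport φ →
              (∫ p, ((Aop μ n φ p : ℝ) : ℂ) * h p) + d * ((Aop μ n φ 0 : ℝ) : ℂ)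
                = (∫ p, ((φ p : ℝ) : ℂ) * g p) + c * ((φ 0 : ℝ) : ℂ) := by
  have hμ1 : 0 < 2 * μ - 1 := by linarith
  refine ⟨64, 64 + 1 / (2 * μ - 1) ^ 2, by positivity, ?_⟩
  rintro n hn g hg c
  have hG : 0 ≤ ∫ p, ‖g p‖ := integral_nonneg fun _ => norm_nonneg _
  by_cases hn0 : n = 0
  · subst hn0
    have hm : 2 * μ ≠ 1 := by intro h; linarith
    obtain ⟨z, hz, hzn, hzt⟩ := solveQ 0 (2 * μ) hm g hg 0 (Or.inr rfl)
    obtain ⟨w, hw, hwn, hwt⟩ := solveQ 0 (2 * μ) hm z hz 0 (Or.inr rfl)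
    obtain ⟨hu, hun, hut, -⟩ := dil_P w hw
    rw [abs_of_pos hμ1, norm_zero, add_zero] at hzn hwn
    have hne : (((2 * μ - 1 : ℝ) : ℂ)) ≠ 0 := by exact_mod_cast hμ1.ne'
    refine ⟨dil 0 (kap 0) w, -c / ((2 * μ - 1 : ℝ) : ℂ) ^ 2, hu, ?_, ?_⟩
    · have h1 : ∫ p, ‖dil 0 (kap 0) w p‖ ≤ 1 / (2 * μ - 1) ^ 2 * ∫ p, ‖g p‖ := by
        refine hun.trans (hwn.trans ((mul_le_mul_of_nonneg_left hzn (by positivity)).trans ?_))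
        apply le_of_eq; field_simp
      have h2 : ‖-c / ((2 * μ - 1 : ℝ) : ℂ) ^ 2‖ = 1 / (2 * μ - 1) ^ 2 * ‖c‖ := by
        rw [norm_div, norm_neg, norm_pow, Complex.norm_real, Real.norm_eq_abs, abs_of_pos hμ1]
        ring
      rw [h2]
      have h3 := norm_nonneg c
      simp only [Int.cast_zero]
      norm_num
      norm_num at h1
      nlinarith
    · intro φ h1 h2
      have hφ : Tst φ := ⟨h1, h2⟩
      have hB := hφ.Bop 0 (2 * μ) (2 * μ)
      have ht : Tst (fun p => Qdag 0 φ p + 2 * μ * φ p) := (hφ.Qdag 0).add (hφ.smul _)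
      have e : ∀ p, Aop μ 0 φ p = Pdag (Bop 0 (2 * μ) (2 * μ) φ) p := by
        intro p; rw [Aop_eq μ 0 hφ]; simp
      have e0 : Aop μ 0 φ 0 = -(2 * μ - 1) ^ 2 * φ 0 := by
        rw [e, Pdag_eq, Qdag_eq hB]
        unfold Bop
        rw [Qdag_eq ht, Qdag_eq hφ]
        ring
      have e1 := hzt φ hφ
      have e2 := hwt _ ht
      rw [zero_mul, add_zero] at e1 e2
      rw [e0]
      simp_rw [e]
      rw [hut _ hB]
      have e3 : ∫ p, ((Bop 0 (2 * μ) (2 * μ) φ p : ℝ) : ℂ) * w p = ∫ p, (φ p : ℂ) * g p := by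
        rw [← e1, ← e2]; rfl
      rw [e3]
      congr 1
      push_cast at hne ⊢
      field_simp
  · have hn64 : 64 ≤ n.natAbs := hn.resolve_left hn0
    have hN : (64 : ℝ) ≤ |(n : ℝ)| := by
      have : (64 : ℤ) ≤ |n| := by rw [Int.abs_eq_natAbs]; exact_mod_cast hn64
      exact_mod_cast this
    have hnR : (n : ℝ) ≠ 0 := by exact_mod_cast hn0
    have hNμ : 64 * μ ≤ |(n : ℝ)| * μ := mul_le_mul_of_nonneg_right hN (by linarith)
    have hμa : |(n : ℝ) * μ| = |(n : ℝ)| * μ := by rw [abs_mul, abs_of_pos (by linarith : 0 < μ)]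
    have hA : |(n : ℝ)| * μ / 2 ≤ |(2 - (n : ℝ)) * μ - 1| := by
      have h1 := abs_sub_abs_le_abs_sub ((n : ℝ) * μ) (2 * μ - 1)
      rw [hμa, abs_of_pos hμ1, show (n : ℝ) * μ - (2 * μ - 1) = -((2 - (n : ℝ)) * μ - 1) by ring,
        abs_neg] at h1
      linarith
    have hB : |(n : ℝ)| * μ / 2 ≤ |(2 + (n : ℝ)) * μ - 1| := by
      have h1 := abs_sub_abs_le_abs_sub ((n : ℝ) * μ) (-(2 * μ - 1))
      rw [hμa, abs_neg, abs_of_pos hμ1,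
        show (n : ℝ) * μ - -(2 * μ - 1) = ((2 + (n : ℝ)) * μ - 1) by ring] at h1
      linarith
    obtain ⟨h, hh, hhn, hht⟩ := largen μ hμ n hnR (by linarith) (by linarith) g hg c
    refine ⟨h, 0, hh, ?_, ?_⟩
    · rw [norm_zero, add_zero]
      refine hhn.trans ?_
      have hF : 0 ≤ (∫ p, ‖g p‖) + ‖c‖ := add_nonneg hG (norm_nonneg c)
      rw [← mul_assoc, ← mul_assoc]
      refine mul_le_mul_of_nonneg_right ?_ hF
      have hq : |(n : ℝ)| / 4 ≤ |(n : ℝ)| * μ / 2 := by nlinarith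
      have b1 : 1 / |(2 + (n : ℝ)) * μ - 1| ≤ 4 / |(n : ℝ)| := by
        rw [div_le_div_iff₀ (by linarith) (by linarith)]; linarith
      have b2 : 1 / |(2 - (n : ℝ)) * μ - 1| ≤ 4 / |(n : ℝ)| := by
        rw [div_le_div_iff₀ (by linarith) (by linarith)]; linarith
      have b3 : 2 * (1 / |(2 + (n : ℝ)) * μ - 1|) * (1 / |(2 - (n : ℝ)) * μ - 1|)
          ≤ 2 * (4 / |(n : ℝ)|) * (4 / |(n : ℝ)|) := by gcongr
      refine b3.trans ?_
      have hsq : |(n : ℝ)| * |(n : ℝ)| = (n : ℝ) ^ 2 := by rw [abs_mul_abs_self]; ring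
      have hn2 : 1 ≤ (n : ℝ) ^ 2 := by rw [← hsq]; nlinarith
      have b4 : 2 * (4 / |(n : ℝ)|) * (4 / |(n : ℝ)|) = 32 / (n : ℝ) ^ 2 := by
        rw [← hsq]; field_simp; norm_num
      rw [b4]
      have b5 : 32 / (n : ℝ) ^ 2 ≤ 64 * (1 + (n : ℝ) ^ 2)⁻¹ := by
        rw [← div_eq_mul_inv, div_le_div_iff₀ (by linarith) (by linarith)]; linarith
      refine b5.trans ?_
      refine mul_le_mul_of_nonneg_right ?_ (by positivity)
      have : 0 ≤ 1 / (2 * μ - 1) ^ 2 := by positivity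
      linarith
    · intro φ h1 h2
      rw [zero_mul, add_zero]
      exact hht φ ⟨h1, h2⟩
end

section
/- Let μ ∈ (2/3, ∞) and C₀ < ∞. Let v ∈ C¹((ℝ²∖{0})×(0,∞); ℝ²) and π ∈ C¹((ℝ²∖{0})×(0,∞); ℝ) satisfy, pointwise on (ℝ²∖{0})×(0,∞): div_x v = 0 and ∂_t v + (v·∇_x)v + ∇_x π = 0. Assume |v(x,t)| ≤ C₀·|x|^{1−1/μ} for all x ≠ 0 and t > 0, and that there is v₀ : ℝ²∖{0} → ℝ² such that v(·,t) → v₀ uniformly on compact subsets of ℝ²∖{0} as t → 0⁺. Then v is a weak solution of the incompressible Euler equations on all of ℝ²×[0,∞) with initial data v₀: for every w ∈ C_c^∞(ℝ²×[0,∞); ℝ²) with div_x w = 0 everywhere, ∫_{ℝ²} v₀(x)·w(x,0) dx + ∫₀^∞ ∫_{ℝ²} [ v·∂_t w + (v⊗v) : ∇_x w ] dx dt = 0, all integrals being absolutely convergent. -/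
open MeasureTheory

/-- Spatial divergence `div_x w` of a time-dependent field `w(x,t)`, at the point
`p = (x,t)`. -/
noncomputable def divx (w : (ℝ × ℝ) × ℝ → ℝ × ℝ) (p : (ℝ × ℝ) × ℝ) : ℝ :=
  fderiv ℝ (fun y => (w (y, p.2)).1) p.1 (1, 0)
    + fderiv ℝ (fun y => (w (y, p.2)).2) p.1 (0, 1)

/-- The integrand `v·∂_t w + (v⊗v) : ∇_x w` of the weak form of the Euler momentum
equation, at the point `p = (x,t)`. -/
noncomputable def eulerForm (v w : (ℝ × ℝ) × ℝ → ℝ × ℝ) (p : (ℝ × ℝ) × ℝ) : ℝ :=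
  (v p).1 * deriv (fun s => (w (p.1, s)).1) p.2
    + (v p).2 * deriv (fun s => (w (p.1, s)).2) p.2
    + (v p).1 * (v p).1 * fderiv ℝ (fun y => (w (y, p.2)).1) p.1 (1, 0)
    + (v p).1 * (v p).2 * fderiv ℝ (fun y => (w (y, p.2)).1) p.1 (0, 1)
    + (v p).2 * (v p).1 * fderiv ℝ (fun y => (w (y, p.2)).2) p.1 (1, 0)
    + (v p).2 * (v p).2 * fderiv ℝ (fun y => (w (y, p.2)).2) p.1 (0, 1)

open Set Filter Topology

/-- space-time -/
abbrev RST := (ℝ × ℝ) × ℝ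

lemma slice_fderiv {f : RST → ℝ} {x : ℝ × ℝ} {t : ℝ} (hf : DifferentiableAt ℝ f (x, t)) (y : ℝ × ℝ) :
    fderiv ℝ (fun z => f (z, t)) x y = fderiv ℝ f (x, t) (y, 0) := by
  have h1 : HasFDerivAt (fun z : ℝ × ℝ => (z, t)) (ContinuousLinearMap.inl ℝ (ℝ × ℝ) ℝ) x :=
    hasFDerivAt_prodMk_left x t
  have h2 : HasFDerivAt (fun z => f (z, t)) _ x := hf.hasFDerivAt.comp x h1
  rw [h2.fderiv]; simp

lemma slice_deriv {f : RST → ℝ} {x : ℝ × ℝ} {t : ℝ} (hf : DifferentiableAt ℝ f (x, t)) :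
    deriv (fun s => f (x, s)) t = fderiv ℝ f (x, t) (0, 1) := by
  have h1 : HasFDerivAt (fun s : ℝ => (x, s)) (ContinuousLinearMap.inr ℝ (ℝ × ℝ) ℝ) t :=
    hasFDerivAt_prodMk_right x t
  have h2 : HasFDerivAt (fun s => f (x, s)) _ t := hf.hasFDerivAt.comp t h1
  rw [h2.hasDerivAt.deriv]; simp

lemma hcs_slice_left {f : RST → ℝ} (hf : HasCompactSupport f) (t : ℝ) :
    HasCompactSupport (fun x => f (x, t)) := by
  refine HasCompactSupport.intro (hf.isCompact.image continuous_fst) (fun x hx => ?_)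
  by_contra h
  exact hx ⟨(x, t), subset_tsupport _ h, rfl⟩

lemma hcs_slice_right {f : RST → ℝ} (hf : HasCompactSupport f) (x : ℝ × ℝ) :
    HasCompactSupport (fun t => f (x, t)) := by
  refine HasCompactSupport.intro (hf.isCompact.image continuous_snd) (fun t hx => ?_)
  by_contra h
  exact hx ⟨(x, t), subset_tsupport _ h, rfl⟩

lemma slab_eq (δ : ℝ) : {p : RST | δ < p.2} = (univ : Set (ℝ × ℝ)) ×ˢ Ioi δ := by
  ext p; simp

lemma cont_fderiv_apply {f : RST → ℝ} (hf : ContDiff ℝ 1 f) (e : RST) :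
    Continuous (fun p => fderiv ℝ f p e) :=
  (hf.continuous_fderiv one_ne_zero).clm_apply continuous_const

lemma integrable_fderiv_apply {f : RST → ℝ} (hf : ContDiff ℝ 1 f) (hc : HasCompactSupport f)
    (e : RST) : Integrable (fun p => fderiv ℝ f p e) :=
  (cont_fderiv_apply hf e).integrable_of_hasCompactSupport (hc.fderiv_apply ℝ e)

lemma int_spatial {f : RST → ℝ} (hf : ContDiff ℝ 1 f) (hc : HasCompactSupport f) (δ : ℝ)
    (y : ℝ × ℝ) : ∫ p in {p : RST | δ < p.2}, fderiv ℝ f p (y, 0) = 0 := by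
  have hi := integrable_fderiv_apply hf hc (y, 0)
  have hi' := hi.integrableOn (s := {p : RST | δ < p.2})
  rw [slab_eq] at hi' ⊢
  rw [Measure.volume_eq_prod] at hi' ⊢
  rw [IntegrableOn, ← Measure.prod_restrict] at hi'
  rw [← Measure.prod_restrict, integral_prod_symm _ hi', Measure.restrict_univ]
  have : ∀ t, ∫ x, fderiv ℝ f (x, t) (y, 0) = 0 := by
    intro t
    have hd : ∀ x, fderiv ℝ (fun z => f (z, t)) x y = fderiv ℝ f (x, t) (y, 0) := fun x =>
      slice_fderiv (hf.differentiable one_ne_zero _) y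
    have hs : ContDiff ℝ 1 (fun z => f (z, t)) := hf.comp (by fun_prop)
    have hcs := hcs_slice_left hc t
    have := integral_mul_fderiv_eq_neg_fderiv_mul_of_integrable (μ := (volume : Measure (ℝ × ℝ)))
      (f := fun _ => (1 : ℝ)) (g := fun z => f (z, t)) (v := y)
      (by simp) (by
        simp only [one_mul]
        exact ((hs.continuous_fderiv one_ne_zero).clm_apply
          continuous_const).integrable_of_hasCompactSupport (hcs.fderiv_apply ℝ y))
      (by
        simp only [one_mul]
        exact hs.continuous.integrable_of_hasCompactSupport hcs)
      (by intros; fun_prop)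
      (fun x _ => hs.differentiable one_ne_zero x)
    simpa [hd] using this
  simp [this]

lemma int_time {f : RST → ℝ} (hf : ContDiff ℝ 1 f) (hc : HasCompactSupport f) (δ : ℝ) :
    ∫ p in {p : RST | δ < p.2}, fderiv ℝ f p (0, 1) = - ∫ x, f (x, δ) := by
  have hi := integrable_fderiv_apply hf hc (0, 1)
  have hi' := hi.integrableOn (s := {p : RST | δ < p.2})
  rw [slab_eq] at hi' ⊢
  rw [Measure.volume_eq_prod] at hi' ⊢
  rw [IntegrableOn, ← Measure.prod_restrict] at hi'
  rw [← Measure.prod_restrict, integral_prod _ hi', Measure.restrict_univ, ← integral_neg]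
  congr 1
  ext x
  have hs : ContDiff ℝ 1 (fun s => f (x, s)) := hf.comp (by fun_prop)
  rw [← HasCompactSupport.integral_Ioi_deriv_eq hs (hcs_slice_right hc x) δ]
  congr 1
  ext t
  exact (slice_deriv (hf.differentiable one_ne_zero _)).symm

lemma integrableOn_norm_rpow {c : ℝ} (hc : -2 < c) (R : ℝ) :
    IntegrableOn (fun x : ℝ × ℝ => ‖x‖ ^ c) (Metric.ball 0 R) := by
  rw [integrableOn_fun_norm_addHaar (volume : Measure (ℝ × ℝ)) (f := fun r : ℝ => r ^ c)]
  have h : IntegrableOn (fun r : ℝ => r ^ (c + 1)) (Ioo 0 R) := by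
    rcases le_or_gt R 0 with h | h
    · simp [Ioo_eq_empty_of_le h]
    · exact (intervalIntegral.integrableOn_Ioo_rpow_iff h).2 (by linarith)
  refine h.congr_fun (fun r hr => ?_) measurableSet_Ioo
  have : Module.finrank ℝ (ℝ × ℝ) - 1 = 1 := by simp
  simp only [this, pow_one, smul_eq_mul]
  rw [Real.rpow_add_one hr.1.ne', mul_comm]

lemma param_int {g : RST × ℝ → ℝ} (hg : ContDiff ℝ 1 g) :
    ContDiff ℝ 1 (fun p => ∫ s in (0 : ℝ)..1, g (p, s)) ∧
    ∀ p e, fderiv ℝ (fun p => ∫ s in (0 : ℝ)..1, g (p, s)) p e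
      = ∫ s in (0 : ℝ)..1, fderiv ℝ g (p, s) (e, 0) := by
  set L : RST × ℝ → (RST →L[ℝ] ℝ) := fun q =>
    (fderiv ℝ g q).comp (ContinuousLinearMap.inl ℝ RST ℝ) with hL
  have hLc : Continuous L := (hg.continuous_fderiv one_ne_zero).clm_comp continuous_const
  have key : ∀ p, HasFDerivAt (fun p => ∫ s in (0 : ℝ)..1, g (p, s))
      (∫ s in (0 : ℝ)..1, L (p, s)) p := by
    intro p
    have hK : IsCompact ((Metric.closedBall p 1) ×ˢ (Icc (0 : ℝ) 1)) :=
      (isCompact_closedBall p 1).prod isCompact_Icc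
    obtain ⟨C, hC⟩ := hK.exists_bound_of_continuousOn hLc.continuousOn
    refine intervalIntegral.hasFDerivAt_integral_of_dominated_of_fderiv_le
      (F := fun p s => g (p, s)) (F' := fun p s => L (p, s)) (bound := fun _ => C)
      (s := Metric.closedBall p 1) (Metric.closedBall_mem_nhds p one_pos) ?_ ?_ ?_ ?_ ?_ ?_
    · refine Eventually.of_forall fun q => ?_
      exact (hg.continuous.comp (by fun_prop)).aestronglyMeasurable
    · exact (hg.continuous.comp (by fun_prop)).intervalIntegrable _ _
    · exact (hLc.comp (by fun_prop)).aestronglyMeasurable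
    · refine Eventually.of_forall fun s hs q hq => hC _ ⟨hq, ?_⟩
      rw [uIoc_of_le zero_le_one] at hs
      exact ⟨hs.1.le, hs.2⟩
    · exact intervalIntegrable_const
    · refine Eventually.of_forall fun s hs q hq => ?_
      exact (hg.differentiable one_ne_zero (q, s)).hasFDerivAt.comp q (hasFDerivAt_prodMk_left q s)
  have hfd : fderiv ℝ (fun p => ∫ s in (0 : ℝ)..1, g (p, s)) =
      fun p => ∫ s in (0 : ℝ)..1, L (p, s) := funext fun p => (key p).fderiv
  constructor
  · rw [contDiff_one_iff_fderiv]
    refine ⟨fun p => (key p).differentiableAt, ?_⟩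
    rw [hfd]
    exact intervalIntegral.continuous_parametric_intervalIntegral_of_continuous'
      (f := fun p s => L (p, s)) (by simpa using! hLc) _ _
  · intro p e
    rw [hfd, ContinuousLinearMap.intervalIntegral_apply]
    · simp [hL]
    · exact (hLc.comp (by fun_prop : Continuous fun s : ℝ => (p, s))).intervalIntegrable _ _

lemma exists_stream {w1 w2 : RST → ℝ} (h1 : ContDiff ℝ 1 w1) (h2 : ContDiff ℝ 1 w2)
    (hdiv : ∀ p, fderiv ℝ w1 p ((1, 0), 0) + fderiv ℝ w2 p ((0, 1), 0) = 0) :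
    ∃ ψ : RST → ℝ, ContDiff ℝ 1 ψ ∧
      (∀ p, fderiv ℝ ψ p ((1, 0), 0) = w2 p) ∧ (∀ p, fderiv ℝ ψ p ((0, 1), 0) = - w1 p) ∧
      (∀ x t M, (∀ y, |w1 (y, t)| ≤ M ∧ |w2 (y, t)| ≤ M) → |ψ (x, t)| ≤ 2 * M * ‖x‖) := by
  set S : RST × ℝ → RST := fun q => (q.2 • q.1.1, q.1.2) with hS
  set g : RST × ℝ → ℝ := fun q => q.1.1.1 * w2 (S q) - q.1.1.2 * w1 (S q) with hgdef
  have hSc : ContDiff ℝ 1 S := by fun_prop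
  have hg : ContDiff ℝ 1 g := by fun_prop
  obtain ⟨hψ, hd⟩ := param_int hg
  have hlin : ∀ (w : RST → ℝ) p (a b : ℝ), fderiv ℝ w p ((a, b), 0) =
      a * fderiv ℝ w p ((1, 0), 0) + b * fderiv ℝ w p ((0, 1), 0) := by
    intro w p a b
    rw [← smul_eq_mul, ← smul_eq_mul, ← map_smul, ← map_smul, ← map_add]
    simp
  have hSd : ∀ q, HasFDerivAt S ((q.2 • (ContinuousLinearMap.fst ℝ (ℝ × ℝ) ℝ).comp
      (ContinuousLinearMap.fst ℝ RST ℝ) + (ContinuousLinearMap.snd ℝ RST ℝ).smulRight q.1.1).prod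
      ((ContinuousLinearMap.snd ℝ (ℝ × ℝ) ℝ).comp (ContinuousLinearMap.fst ℝ RST ℝ))) q := by
    intro q
    refine HasFDerivAt.prodMk ?_ ?_
    · exact (ContinuousLinearMap.hasFDerivAt (ContinuousLinearMap.snd ℝ RST ℝ)).smul
        (((ContinuousLinearMap.fst ℝ (ℝ × ℝ) ℝ).comp
          (ContinuousLinearMap.fst ℝ RST ℝ)).hasFDerivAt)
    · exact ((ContinuousLinearMap.snd ℝ (ℝ × ℝ) ℝ).comp
          (ContinuousLinearMap.fst ℝ RST ℝ)).hasFDerivAt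
  have hwS : ∀ (w : RST → ℝ), ContDiff ℝ 1 w → ∀ (p : RST) (s : ℝ) (y : ℝ × ℝ) (r : ℝ),
      fderiv ℝ (fun q => w (S q)) (p, s) ((y, 0), r) =
        fderiv ℝ w (S (p, s)) (s • y + r • p.1, 0) := by
    intro w hw p s y r
    have := ((hw.differentiable one_ne_zero (S (p, s))).hasFDerivAt.comp (p, s) (hSd (p, s))).fderiv
    rw [Function.comp_def] at this
    rw [this]; simp
  have hgd : ∀ (p : RST) (s : ℝ) (y : ℝ × ℝ), fderiv ℝ g (p, s) ((y, 0), 0) =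
      y.1 * w2 (S (p, s)) + p.1.1 * fderiv ℝ w2 (S (p, s)) (s • y, 0)
      - (y.2 * w1 (S (p, s)) + p.1.2 * fderiv ℝ w1 (S (p, s)) (s • y, 0)) := by
    intro p s y
    have e1 : HasFDerivAt (fun q : RST × ℝ => q.1.1.1) ((ContinuousLinearMap.fst ℝ ℝ ℝ).comp
      ((ContinuousLinearMap.fst ℝ (ℝ × ℝ) ℝ).comp (ContinuousLinearMap.fst ℝ RST ℝ))) (p, s) :=
      ((ContinuousLinearMap.fst ℝ ℝ ℝ).comp ((ContinuousLinearMap.fst ℝ (ℝ × ℝ) ℝ).comp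
        (ContinuousLinearMap.fst ℝ RST ℝ))).hasFDerivAt
    have e2 : HasFDerivAt (fun q : RST × ℝ => q.1.1.2) ((ContinuousLinearMap.snd ℝ ℝ ℝ).comp
      ((ContinuousLinearMap.fst ℝ (ℝ × ℝ) ℝ).comp (ContinuousLinearMap.fst ℝ RST ℝ))) (p, s) :=
      ((ContinuousLinearMap.snd ℝ ℝ ℝ).comp ((ContinuousLinearMap.fst ℝ (ℝ × ℝ) ℝ).comp
        (ContinuousLinearMap.fst ℝ RST ℝ))).hasFDerivAt
    have d1 : DifferentiableAt ℝ (fun q => w1 (S q)) (p, s) :=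
      (h1.comp hSc).differentiable one_ne_zero _
    have d2 : DifferentiableAt ℝ (fun q => w2 (S q)) (p, s) :=
      (h2.comp hSc).differentiable one_ne_zero _
    have := ((e1.mul d2.hasFDerivAt).sub (e2.mul d1.hasFDerivAt)).fderiv
    have h' : fderiv ℝ g (p, s) = _ := this
    rw [h']
    have a1 := hwS w1 h1 p s y 0
    have a2 := hwS w2 h2 p s y 0
    simp only [zero_smul, add_zero] at a1 a2
    simp [a1, a2]
    ring
  have ftc : ∀ (w : RST → ℝ), ContDiff ℝ 1 w → ∀ p : RST,
      ∫ s in (0 : ℝ)..1, (w (S (p, s)) + s * fderiv ℝ w (S (p, s)) (p.1, 0)) = w p := by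
    intro w hw p
    have hder : ∀ s ∈ uIcc (0 : ℝ) 1, HasDerivAt (fun s => s * w (S (p, s)))
        (w (S (p, s)) + s * fderiv ℝ w (S (p, s)) (p.1, 0)) s := by
      intro s _
      have k1 : HasFDerivAt (fun s : ℝ => (p, s)) (ContinuousLinearMap.inr ℝ RST ℝ) s :=
        hasFDerivAt_prodMk_right p s
      have k2 : HasFDerivAt (fun s : ℝ => w (S (p, s))) _ s :=
        (((hw.comp hSc).differentiable one_ne_zero (p, s)).hasFDerivAt).comp s k1
      have k3 := (hasDerivAt_id s).mul k2.hasDerivAt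
      convert! k3 using 1
      have := hwS w hw p s 0 1
      simp at this
      simp [Function.comp_def]
      exact Or.inl this.symm
    rw [intervalIntegral.integral_eq_sub_of_hasDerivAt hder]
    · simp [hS]
    · refine Continuous.intervalIntegrable ?_ _ _
      have := hw.continuous_fderiv one_ne_zero
      have := hw.continuous
      have := hSc.continuous
      fun_prop
  refine ⟨_, hψ, ?_, ?_, ?_⟩
  · intro p
    rw [hd, ← ftc w2 h2 p]
    refine intervalIntegral.integral_congr fun s _ => ?_
    simp only [hgd]
    have e := hdiv (S (p, s))
    have e1 := hlin w1 (S (p, s)) s 0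
    have e2 := hlin w2 (S (p, s)) s 0
    have e3 := hlin w2 (S (p, s)) p.1.1 p.1.2
    simp at e1 e2 e3
    simp [e1, e2, e3]
    linear_combination (- s * p.1.2) * e
  · intro p
    rw [hd, ← ftc w1 h1 p, ← intervalIntegral.integral_neg]
    refine intervalIntegral.integral_congr fun s _ => ?_
    simp only [hgd]
    have e := hdiv (S (p, s))
    have e1 := hlin w1 (S (p, s)) 0 s
    have e2 := hlin w2 (S (p, s)) 0 s
    have e3 := hlin w1 (S (p, s)) p.1.1 p.1.2
    simp at e1 e2 e3
    simp [e1, e2, e3]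
    linear_combination (s * p.1.1) * e
  · intro x t M hM
    have := intervalIntegral.norm_integral_le_of_norm_le_const (a := 0) (b := 1)
      (f := fun s => g ((x, t), s)) (C := 2 * M * ‖x‖) (fun s _ => ?_)
    · simpa using this
    · simp only [hgdef, hS, Real.norm_eq_abs]
      have m0 : 0 ≤ M := (abs_nonneg _).trans (hM 0).1
      have n1 : |x.1| ≤ ‖x‖ := norm_fst_le x
      have n2 : |x.2| ≤ ‖x‖ := norm_snd_le x
      have b1 := mul_le_mul n1 (hM (s • x)).2 (abs_nonneg _) (norm_nonneg _)
      have b2 := mul_le_mul n2 (hM (s • x)).1 (abs_nonneg _) (norm_nonneg _)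
      rw [← abs_mul] at b1 b2
      calc _ ≤ _ := abs_sub _ _
        _ ≤ _ := add_le_add b1 b2
        _ = _ := by ring

/-- punctured domain -/
def UU : Set RST := {p : (ℝ × ℝ) × ℝ | p.1 ≠ 0 ∧ 0 < p.2}

lemma isOpen_UU : IsOpen UU :=
  (isOpen_ne_fun continuous_fst continuous_const).inter (isOpen_lt continuous_const continuous_snd)

/-- scalar form of the weak integrand -/
noncomputable def EF (u1 u2 a1 a2 : RST → ℝ) (p : RST) : ℝ :=
  u1 p * fderiv ℝ a1 p (0, 1) + u2 p * fderiv ℝ a2 p (0, 1)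
    + u1 p * u1 p * fderiv ℝ a1 p ((1, 0), 0) + u1 p * u2 p * fderiv ℝ a1 p ((0, 1), 0)
    + u2 p * u1 p * fderiv ℝ a2 p ((1, 0), 0) + u2 p * u2 p * fderiv ℝ a2 p ((0, 1), 0)

lemma contDiff_mul_supp {f g : RST → ℝ} (hf : ContDiffOn ℝ 1 f UU) (hg : ContDiff ℝ 1 g)
    (hs : tsupport g ⊆ UU) : ContDiff ℝ 1 (f * g) := by
  rw [contDiff_iff_contDiffAt]
  intro p
  by_cases hp : p ∈ UU
  · exact (hf.contDiffAt (isOpen_UU.mem_nhds hp)).mul hg.contDiffAt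
  · have : g =ᶠ[𝓝 p] 0 := notMem_tsupport_iff_eventuallyEq.1 (fun h => hp (hs h))
    have h2 : f * g =ᶠ[𝓝 p] fun _ => 0 := by
      filter_upwards [this] with q hq
      simp [hq]
    exact contDiffAt_const.congr_of_eventuallyEq h2

lemma weak_away {u1 u2 q : RST → ℝ} (hu1 : ContDiffOn ℝ 1 u1 UU) (hu2 : ContDiffOn ℝ 1 u2 UU)
    (hq : ContDiffOn ℝ 1 q UU)
    (hD : ∀ p ∈ UU, fderiv ℝ u1 p ((1, 0), 0) + fderiv ℝ u2 p ((0, 1), 0) = 0)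
    (hm1 : ∀ p ∈ UU, fderiv ℝ u1 p (0, 1) + u1 p * fderiv ℝ u1 p ((1, 0), 0)
      + u2 p * fderiv ℝ u1 p ((0, 1), 0) + fderiv ℝ q p ((1, 0), 0) = 0)
    (hm2 : ∀ p ∈ UU, fderiv ℝ u2 p (0, 1) + u1 p * fderiv ℝ u2 p ((1, 0), 0)
      + u2 p * fderiv ℝ u2 p ((0, 1), 0) + fderiv ℝ q p ((0, 1), 0) = 0)
    {a1 a2 : RST → ℝ} (ha1 : ContDiff ℝ 1 a1) (ha2 : ContDiff ℝ 1 a2)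
    (hc1 : HasCompactSupport a1) (hc2 : HasCompactSupport a2)
    (hdiv : ∀ p, fderiv ℝ a1 p ((1, 0), 0) + fderiv ℝ a2 p ((0, 1), 0) = 0)
    {r : ℝ} (hr : 0 < r) (hz1 : ∀ p : RST, ‖p.1‖ < r → a1 p = 0)
    (hz2 : ∀ p : RST, ‖p.1‖ < r → a2 p = 0) {δ : ℝ} (hδ : 0 < δ) :
    ∫ p in {p : RST | δ < p.2}, EF u1 u2 a1 a2 p
      = - ∫ x, (u1 (x, δ) * a1 (x, δ) + u2 (x, δ) * a2 (x, δ)) := by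
  set θ : RST → ℝ := fun p => Real.smoothTransition ((p.2 - δ / 3) / (δ / 3)) with hθ
  have hθc : ContDiff ℝ 1 θ := by
    refine (Real.smoothTransition.contDiff (n := 1)).comp ?_
    fun_prop
  have hθ0 : ∀ p : RST, p.2 ≤ δ / 3 → θ p = 0 := fun p hp =>
    Real.smoothTransition.zero_of_nonpos (div_nonpos_of_nonpos_of_nonneg (by linarith) (by linarith))
  have hθ1 : ∀ p : RST, 2 * δ / 3 ≤ p.2 → θ p = 1 := fun p hp =>
    Real.smoothTransition.one_of_one_le (by rw [le_div_iff₀ (by positivity)]; linarith)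
  have hsupp : ∀ a : RST → ℝ, (∀ p : RST, ‖p.1‖ < r → a p = 0) → tsupport (a * θ) ⊆ UU := by
    intro a ha
    have hcl : IsClosed {p : RST | r ≤ ‖p.1‖ ∧ δ / 3 ≤ p.2} :=
      (isClosed_le continuous_const continuous_fst.norm).inter
        (isClosed_le continuous_const continuous_snd)
    refine (closure_minimal (fun p hp => ?_) hcl).trans fun p hp => ?_
    · constructor
      · by_contra h
        exact hp (by simp [ha p (not_le.1 h)])
      · by_contra h
        exact hp (by simp [hθ0 p (not_le.1 h).le])
    · refine ⟨fun h => ?_, lt_of_lt_of_le (by positivity) hp.2⟩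
      have := hp.1
      rw [h] at this
      simp at this
      linarith
  set b1 := a1 * θ with hb1
  set b2 := a2 * θ with hb2
  have s1 : tsupport b1 ⊆ UU := hsupp a1 hz1
  have s2 : tsupport b2 ⊆ UU := hsupp a2 hz2
  have cb1 : ContDiff ℝ 1 b1 := ha1.mul hθc
  have cb2 : ContDiff ℝ 1 b2 := ha2.mul hθc
  have k1 : HasCompactSupport b1 := hc1.mul_right
  have k2 : HasCompactSupport b2 := hc2.mul_right
  have st : ∀ (f g : RST → ℝ), tsupport g ⊆ UU → tsupport (f * g) ⊆ UU := fun f g h =>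
    (tsupport_mul_subset_right).trans h
  set G3 := u1 * b1 + u2 * b2 with hG3
  set G1 := u1 * (u1 * b1) + u1 * (u2 * b2) + q * b1 with hG1
  set G2 := u2 * (u1 * b1) + u2 * (u2 * b2) + q * b2 with hG2
  have cu1b1 := contDiff_mul_supp hu1 cb1 s1
  have cu2b2 := contDiff_mul_supp hu2 cb2 s2
  have cG3 : ContDiff ℝ 1 G3 := cu1b1.add cu2b2
  have cG1 : ContDiff ℝ 1 G1 :=
    ((contDiff_mul_supp hu1 cu1b1 (st _ _ s1)).add (contDiff_mul_supp hu1 cu2b2 (st _ _ s2))).add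
      (contDiff_mul_supp hq cb1 s1)
  have cG2 : ContDiff ℝ 1 G2 :=
    ((contDiff_mul_supp hu2 cu1b1 (st _ _ s1)).add (contDiff_mul_supp hu2 cu2b2 (st _ _ s2))).add
      (contDiff_mul_supp hq cb2 s2)
  have kG3 : HasCompactSupport G3 := (k1.mul_left).add (k2.mul_left)
  have kG1 : HasCompactSupport G1 := ((k1.mul_left.mul_left).add (k2.mul_left.mul_left)).add k1.mul_left
  have kG2 : HasCompactSupport G2 := ((k1.mul_left.mul_left).add (k2.mul_left.mul_left)).add k2.mul_left
  have hpt : ∀ p : RST, δ < p.2 → EF u1 u2 a1 a2 p =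
      fderiv ℝ G1 p ((1, 0), 0) + fderiv ℝ G2 p ((0, 1), 0) + fderiv ℝ G3 p (0, 1) := by
    intro p hp
    have hnear : ∀ᶠ z : RST in 𝓝 p, θ z = 1 := by
      have : ∀ᶠ z : RST in 𝓝 p, δ < z.2 := continuous_snd.continuousAt.eventually (lt_mem_nhds hp)
      filter_upwards [this] with z hz
      exact hθ1 z (by linarith)
    by_cases hx : p.1 = 0
    · have hn : ∀ᶠ z : RST in 𝓝 p, ‖z.1‖ < r := by
        have hcz : ContinuousAt (fun z : RST => ‖z.1‖) p := by fun_prop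
        exact hcz.eventually (gt_mem_nhds (by simpa [hx] using hr))
      have e1 : a1 =ᶠ[𝓝 p] fun _ => 0 := by filter_upwards [hn] with z hz using hz1 z hz
      have e2 : a2 =ᶠ[𝓝 p] fun _ => 0 := by filter_upwards [hn] with z hz using hz2 z hz
      have g1 : G1 =ᶠ[𝓝 p] fun _ => 0 := by
        filter_upwards [e1, e2] with z h1 h2
        simp [hG1, hb1, hb2, h1, h2]
      have g2 : G2 =ᶠ[𝓝 p] fun _ => 0 := by
        filter_upwards [e1, e2] with z h1 h2
        simp [hG2, hb1, hb2, h1, h2]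
      have g3 : G3 =ᶠ[𝓝 p] fun _ => 0 := by
        filter_upwards [e1, e2] with z h1 h2
        simp [hG3, hb1, hb2, h1, h2]
      simp [EF, e1.fderiv_eq, e2.fderiv_eq, g1.fderiv_eq, g2.fderiv_eq, g3.fderiv_eq]
    · have hpU : p ∈ UU := ⟨hx, hδ.trans hp⟩
      have nh := isOpen_UU.mem_nhds hpU
      have du1 := ((hu1.contDiffAt nh).differentiableAt one_ne_zero).hasFDerivAt
      have du2 := ((hu2.contDiffAt nh).differentiableAt one_ne_zero).hasFDerivAt
      have dq := ((hq.contDiffAt nh).differentiableAt one_ne_zero).hasFDerivAt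
      have eb1 : b1 =ᶠ[𝓝 p] a1 := by filter_upwards [hnear] with z hz; simp [hb1, hz]
      have eb2 : b2 =ᶠ[𝓝 p] a2 := by filter_upwards [hnear] with z hz; simp [hb2, hz]
      have db1 : HasFDerivAt b1 (fderiv ℝ a1 p) p :=
        (ha1.differentiable one_ne_zero p).hasFDerivAt.congr_of_eventuallyEq eb1
      have db2 : HasFDerivAt b2 (fderiv ℝ a2 p) p :=
        (ha2.differentiable one_ne_zero p).hasFDerivAt.congr_of_eventuallyEq eb2
      have v1 : b1 p = a1 p := eb1.eq_of_nhds
      have v2 : b2 p = a2 p := eb2.eq_of_nhds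
      have f1 := (((du1.mul (du1.mul db1)).add (du1.mul (du2.mul db2))).add (dq.mul db1)).fderiv
      have f2 := (((du2.mul (du1.mul db1)).add (du2.mul (du2.mul db2))).add (dq.mul db2)).fderiv
      have f3 := ((du1.mul db1).add (du2.mul db2)).fderiv
      have f1' : fderiv ℝ G1 p = _ := f1
      have f2' : fderiv ℝ G2 p = _ := f2
      have f3' : fderiv ℝ G3 p = _ := f3
      rw [f1', f2', f3']
      have A := hD p hpU
      have B := hm1 p hpU
      have C := hm2 p hpU
      have D := hdiv p
      simp [EF, v1, v2]
      linear_combination (-a1 p) * B - a2 p * C - (u1 p * a1 p + u2 p * a2 p) * A - q p * D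
  have hms : MeasurableSet {p : RST | δ < p.2} :=
    (isOpen_lt continuous_const continuous_snd).measurableSet
  rw [setIntegral_congr_fun hms hpt]
  have i1 := (integrable_fderiv_apply cG1 kG1 ((1, 0), 0)).integrableOn (s := {p : RST | δ < p.2})
  have i2 := (integrable_fderiv_apply cG2 kG2 ((0, 1), 0)).integrableOn (s := {p : RST | δ < p.2})
  have i3 := (integrable_fderiv_apply cG3 kG3 (0, 1)).integrableOn (s := {p : RST | δ < p.2})
  have hadd := integral_add (i1.add i2) i3
  simp only [Pi.add_apply] at hadd
  rw [hadd, integral_add i1 i2, int_spatial cG1 kG1, int_spatial cG2 kG2, int_time cG3 kG3]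
  have : ∀ x, θ (x, δ) = 1 := fun x => hθ1 (x, δ) (by simp; linarith)
  simp [hG3, hb1, hb2, this]

lemma lift_fderiv {f : ℝ × ℝ → ℝ} (hf : Differentiable ℝ f) (N : ℝ) (p : RST) :
    HasFDerivAt (fun p : RST => f (N • p.1))
      (N • (fderiv ℝ f (N • p.1)).comp (ContinuousLinearMap.fst ℝ (ℝ × ℝ) ℝ)) p := by
  have h1 : HasFDerivAt (fun p : RST => N • p.1) (N • ContinuousLinearMap.fst ℝ (ℝ × ℝ) ℝ) p :=
    (ContinuousLinearMap.fst ℝ (ℝ × ℝ) ℝ).hasFDerivAt.const_smul N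
  have h2 := (hf (N • p.1)).hasFDerivAt.comp p h1
  rw [ContinuousLinearMap.comp_smul] at h2
  exact h2

lemma cut_bounds {χ X : ℝ × ℝ → ℝ} {w ψ : RST → ℝ} {B M L R : ℝ}
    (hχ : ContDiff ℝ 1 χ) (hX : ContDiff ℝ 1 X) (hw : ContDiff ℝ 1 w) (hψ : ContDiff ℝ 1 ψ)
    (hB : 0 ≤ B) (hM : 0 ≤ M) (hL : 0 ≤ L) (hR : 0 ≤ R)
    (hχ1 : ∀ y, 2 ≤ ‖y‖ → χ y = 1) (hX0 : ∀ y, 2 ≤ ‖y‖ → X y = 0)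
    (bχ : ∀ y, |χ y| ≤ 1) (bDχ : ∀ y, ‖fderiv ℝ χ y‖ ≤ B) (bX : ∀ y, |X y| ≤ B)
    (bDX : ∀ y, ‖fderiv ℝ X y‖ ≤ B) (bw : ∀ p, |w p| ≤ M) (bDw : ∀ p, ‖fderiv ℝ w p‖ ≤ M)
    (bψ : ∀ p, |ψ p| ≤ 2 * M * ‖p.1‖) (bDψ : ∀ p, ‖p‖ ≤ R + 1 → ‖fderiv ℝ ψ p‖ ≤ L)
    {N : ℝ} (hN : 0 < N) :
    (∀ p : RST, |χ (N • p.1) * w p + N * ψ p * X (N • p.1)| ≤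
        M + 4 * M * B + M * (R + 1) + 2 * (5 * M * B + B * L)) ∧
    (∀ p : RST, ‖p‖ ≤ R + 1 →
      ‖p.1‖ * ‖fderiv ℝ (fun p : RST => χ (N • p.1) * w p + N * ψ p * X (N • p.1)) p‖ ≤
        M + 4 * M * B + M * (R + 1) + 2 * (5 * M * B + B * L)) := by
  have hnorm : ∀ x : ℝ × ℝ, ‖N • x‖ = N * ‖x‖ := fun x => by
    rw [norm_smul, Real.norm_of_nonneg hN.le]
  have hp1 : 0 ≤ M * (R + 1) := by positivity
  have hp2 : 0 ≤ 2 * (5 * M * B + B * L) := by positivity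
  have hp3 : 0 ≤ 4 * M * B := by positivity
  have hNψ : ∀ p : RST, N * ‖p.1‖ ≤ 2 → |N * ψ p| ≤ 4 * M := by
    intro p hp
    rw [abs_mul, abs_of_pos hN]
    calc N * |ψ p| ≤ N * (2 * M * ‖p.1‖) := by gcongr; exact bψ p
      _ = 2 * M * (N * ‖p.1‖) := by ring
      _ ≤ 2 * M * 2 := by gcongr
      _ = 4 * M := by ring
  constructor
  · intro p
    have h1 : |χ (N • p.1) * w p| ≤ M := by
      rw [abs_mul]
      calc _ ≤ 1 * M := by gcongr; exact bχ _; exact bw p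
        _ = M := one_mul M
    have h2 : |N * ψ p * X (N • p.1)| ≤ 4 * M * B := by
      rcases le_or_gt 2 (N * ‖p.1‖) with h | h
      · rw [hX0 _ (by rw [hnorm]; exact h)]; simpa using hp3
      · rw [abs_mul]
        gcongr
        · exact hNψ p h.le
        · exact bX _
    have := abs_add_le (χ (N • p.1) * w p) (N * ψ p * X (N • p.1))
    linarith
  · intro p hp
    have hx : ‖p.1‖ ≤ R + 1 := (norm_fst_le p).trans hp
    rcases lt_or_ge 2 (N * ‖p.1‖) with h | h
    · have hev : (fun p : RST => χ (N • p.1) * w p + N * ψ p * X (N • p.1)) =ᶠ[𝓝 p] w := by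
        have hcz : ContinuousAt (fun z : RST => N * ‖z.1‖) p := by fun_prop
        filter_upwards [hcz.eventually (lt_mem_nhds h)] with z hz
        have : 2 ≤ ‖N • z.1‖ := by rw [hnorm]; exact hz.le
        rw [hχ1 _ this, hX0 _ this]; ring
      rw [hev.fderiv_eq]
      calc _ ≤ (R + 1) * M := by gcongr; exact bDw p
        _ ≤ _ := by linarith
    · have d1 := lift_fderiv (hχ.differentiable one_ne_zero) N p
      have d2 := lift_fderiv (hX.differentiable one_ne_zero) N p
      have d3 := (hw.differentiable one_ne_zero p).hasFDerivAt
      have d4 := (hψ.differentiable one_ne_zero p).hasFDerivAt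
      have d5 := (d1.mul d3).add ((d4.const_mul N).mul d2)
      have d6 : fderiv ℝ (fun p : RST => χ (N • p.1) * w p + N * ψ p * X (N • p.1)) p = _ := d5.fderiv
      rw [d6]
      have c1 : ‖χ (N • p.1) • fderiv ℝ w p‖ ≤ M := by
        rw [norm_smul]
        calc _ ≤ 1 * M := by gcongr; exact bχ _; exact bDw p
          _ = M := one_mul M
      have nf : ∀ A : (ℝ × ℝ) →L[ℝ] ℝ, ‖A‖ ≤ B →
          ‖N • A.comp (ContinuousLinearMap.fst ℝ (ℝ × ℝ) ℝ)‖ ≤ N * B := by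
        intro A hA
        rw [norm_smul, Real.norm_of_nonneg hN.le]
        gcongr
        calc _ ≤ ‖A‖ * ‖ContinuousLinearMap.fst ℝ (ℝ × ℝ) ℝ‖ := A.opNorm_comp_le _
          _ ≤ ‖A‖ * 1 := by gcongr; exact ContinuousLinearMap.norm_fst_le _ _ _
          _ ≤ B := by simpa using hA
      have c2 : ‖w p • N • (fderiv ℝ χ (N • p.1)).comp (ContinuousLinearMap.fst ℝ (ℝ × ℝ) ℝ)‖
          ≤ M * (N * B) := by
        rw [norm_smul]
        gcongr
        · exact bw p
        · exact nf _ (bDχ _)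
      have c3 : ‖(N * ψ p) • N • (fderiv ℝ X (N • p.1)).comp (ContinuousLinearMap.fst ℝ (ℝ × ℝ) ℝ)‖
          ≤ (4 * M) * (N * B) := by
        rw [norm_smul]
        gcongr
        · exact hNψ p h
        · exact nf _ (bDX _)
      have c4 : ‖X (N • p.1) • N • fderiv ℝ ψ p‖ ≤ B * (N * L) := by
        rw [norm_smul, norm_smul, Real.norm_of_nonneg hN.le]
        gcongr
        · exact bX _
        · exact bDψ p hp
      have tot : ∀ a b c d : RST →L[ℝ] ℝ, ‖a‖ ≤ M → ‖b‖ ≤ M * (N * B) → ‖c‖ ≤ 4 * M * (N * B) →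
          ‖d‖ ≤ B * (N * L) → ‖a + b + (c + d)‖ ≤ M + N * (5 * M * B + B * L) := by
        intro a b c d ha hb hc hd
        have := norm_add_le (a + b) (c + d)
        have := norm_add_le a b
        have := norm_add_le c d
        linarith
      calc _ ≤ ‖p.1‖ * (M + N * (5 * M * B + B * L)) := by
            gcongr
            exact tot _ _ _ _ c1 c2 c3 c4
        _ = ‖p.1‖ * M + (N * ‖p.1‖) * (5 * M * B + B * L) := by ring
        _ ≤ (R + 1) * M + 2 * (5 * M * B + B * L) := by gcongr
        _ ≤ _ := by linarith

lemma bounds_c1 {E F : Type*} [NormedAddCommGroup E] [NormedSpace ℝ E] [NormedAddCommGroup F]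
    [NormedSpace ℝ F] {g : E → F} (hg : ContDiff ℝ 1 g) (hc : HasCompactSupport g) :
    ∃ C1 C2 : ℝ, (∀ y, ‖g y‖ ≤ C1) ∧ (∀ y, ‖fderiv ℝ g y‖ ≤ C2) := by
  obtain ⟨C1, h1⟩ := hc.exists_bound_of_continuous hg.continuous
  obtain ⟨C2, h2⟩ := (hc.fderiv ℝ).exists_bound_of_continuous (hg.continuous_fderiv one_ne_zero)
  exact ⟨C1, C2, h1, h2⟩

lemma exists_bump0 : ∃ f : ℝ × ℝ → ℝ, ContDiff ℝ 2 f ∧ HasCompactSupport f ∧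
    (∀ y, 2 ≤ ‖y‖ → f y = 0) ∧ (∀ y, ‖y‖ ≤ 1 → f y = 1) ∧ (∀ y, 0 ≤ f y) ∧ (∀ y, f y ≤ 1) := by
  let f : ContDiffBump (0 : ℝ × ℝ) := ⟨1, 2, one_pos, one_lt_two⟩
  refine ⟨f, f.contDiff (n := 2), f.hasCompactSupport, fun y hy => ?_, fun y hy => ?_,
    f.nonneg', fun y => f.le_one⟩
  · exact f.zero_of_le_dist (by rw [dist_zero_right]; exact hy)
  · exact f.one_of_mem_closedBall (by rw [mem_closedBall_zero_iff]; exact hy)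

lemma exists_bump : ∃ (χ : ℝ × ℝ → ℝ) (B : ℝ), 0 ≤ B ∧ ContDiff ℝ 2 χ ∧
    (∀ y, 2 ≤ ‖y‖ → χ y = 1) ∧ (∀ y, ‖y‖ ≤ 1 → χ y = 0) ∧ (∀ y, |χ y| ≤ 1) ∧
    (∀ y, ‖fderiv ℝ χ y‖ ≤ B) ∧
    (∀ e : ℝ × ℝ, ‖e‖ ≤ 1 → ∀ y, |fderiv ℝ χ y e| ≤ B ∧
      ‖fderiv ℝ (fun y => fderiv ℝ χ y e) y‖ ≤ B) := by
  obtain ⟨f, hfc, hcs, hf0, hf1, hf2, hf3⟩ := exists_bump0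
  have hsub : ∀ y, HasFDerivAt (fun y => 1 - f y) (-fderiv ℝ f y) y := fun y =>
    (hfc.differentiable two_ne_zero y).hasFDerivAt.const_sub 1
  have hfd : fderiv ℝ (fun y => 1 - f y) = fun y => -fderiv ℝ f y := funext fun y => (hsub y).fderiv
  have hcD : ContDiff ℝ 1 (fderiv ℝ f) := hfc.fderiv_right (by norm_num)
  have hcs1 : HasCompactSupport (fderiv ℝ f) := hcs.fderiv ℝ
  obtain ⟨C1, C2, hC1, hC2⟩ := bounds_c1 hcD hcs1
  have hC10 : 0 ≤ C1 := (norm_nonneg _).trans (hC1 0)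
  have hC20 : 0 ≤ C2 := (norm_nonneg _).trans (hC2 0)
  refine ⟨fun y => 1 - f y, C1 + C2, by positivity, contDiff_const.sub hfc, ?_, ?_, ?_, ?_, ?_⟩
  · intro y hy
    simp [hf0 y hy]
  · intro y hy
    simp [hf1 y hy]
  · intro y
    have := hf2 y
    have := hf3 y
    rw [abs_le]; constructor <;> linarith
  · intro y
    rw [hfd]
    simp only [norm_neg]
    linarith [hC1 y]
  · intro e he y
    rw [hfd]
    constructor
    · have h1 := (fderiv ℝ f y).le_opNorm e
      have h2 := hC1 y
      simp only [neg_apply, abs_neg]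
      rw [← Real.norm_eq_abs]
      calc _ ≤ _ := h1
        _ ≤ C1 * 1 := by gcongr
        _ ≤ _ := by linarith
    · have hd : HasFDerivAt (fun y => (-fderiv ℝ f y) e)
          (((ContinuousLinearMap.apply ℝ ℝ e)).comp (-fderiv ℝ (fderiv ℝ f) y)) y :=
        (ContinuousLinearMap.apply ℝ ℝ e).hasFDerivAt.comp y
          (hcD.differentiable one_ne_zero y).hasFDerivAt.neg
      rw [hd.fderiv]
      refine ContinuousLinearMap.opNorm_le_bound _ (by positivity) fun z => ?_
      simp only [ContinuousLinearMap.comp_apply, neg_apply,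
        ContinuousLinearMap.apply_apply, norm_neg]
      calc _ ≤ ‖fderiv ℝ (fderiv ℝ f) y z‖ * ‖e‖ := ContinuousLinearMap.le_opNorm _ _
        _ ≤ (‖fderiv ℝ (fderiv ℝ f) y‖ * ‖z‖) * 1 := by
            gcongr; exact ContinuousLinearMap.le_opNorm _ _
        _ ≤ (C2 * ‖z‖) * 1 := by gcongr; exact hC2 y
        _ ≤ _ := by rw [mul_one]; gcongr; linarith

lemma exists_cutoff {w1 w2 : RST → ℝ} (h1 : ContDiff ℝ 1 w1) (h2 : ContDiff ℝ 1 w2)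
    (k1 : HasCompactSupport w1) (k2 : HasCompactSupport w2)
    (hdiv : ∀ p, fderiv ℝ w1 p ((1, 0), 0) + fderiv ℝ w2 p ((0, 1), 0) = 0) :
    ∃ (a1 a2 : ℕ → RST → ℝ) (R K : ℝ), 0 < R ∧ 0 ≤ K ∧ ∀ n : ℕ,
      (ContDiff ℝ 1 (a1 n) ∧ ContDiff ℝ 1 (a2 n)) ∧
      (HasCompactSupport (a1 n) ∧ HasCompactSupport (a2 n)) ∧
      (∀ p, fderiv ℝ (a1 n) p ((1, 0), 0) + fderiv ℝ (a2 n) p ((0, 1), 0) = 0) ∧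
      (∀ p, ‖p.1‖ < 1 / ((n : ℝ) + 1) → a1 n p = 0 ∧ a2 n p = 0) ∧
      (∀ p, 2 / ((n : ℝ) + 1) ≤ ‖p.1‖ → a1 n p = w1 p ∧ a2 n p = w2 p) ∧
      (∀ p, R < ‖p‖ → a1 n p = 0 ∧ a2 n p = 0) ∧
      (∀ p, |a1 n p| ≤ K ∧ |a2 n p| ≤ K) ∧
      (∀ p, ‖p‖ ≤ R + 1 → ‖p.1‖ * ‖fderiv ℝ (a1 n) p‖ ≤ K ∧ ‖p.1‖ * ‖fderiv ℝ (a2 n) p‖ ≤ K) := by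
  obtain ⟨χ, B, hB, hχ, hχ1, hχ0, bχ, bDχ, bX⟩ := exists_bump
  obtain ⟨ψ, hψ, hψ1, hψ2, hψb⟩ := exists_stream h1 h2 hdiv
  obtain ⟨R1, hR1⟩ := k1.isCompact.isBounded.subset_closedBall 0
  obtain ⟨R2, hR2⟩ := k2.isCompact.isBounded.subset_closedBall 0
  obtain ⟨C1, C2, hC1, hC2⟩ := bounds_c1 h1 k1
  obtain ⟨C3, C4, hC3, hC4⟩ := bounds_c1 h2 k2
  set M := max (max C1 C2) (max C3 C4) with hM
  set R := max (max R1 R2) 2 with hR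
  have hR2' : 2 ≤ R := le_max_right _ _
  have hw0 : ∀ p, R < ‖p‖ → w1 p = 0 ∧ w2 p = 0 := by
    intro p hp
    constructor
    · by_contra h
      have := hR1 (subset_tsupport _ h)
      rw [mem_closedBall_zero_iff] at this
      have : R1 ≤ R := (le_max_left _ _).trans (le_max_left _ _)
      linarith
    · by_contra h
      have := hR2 (subset_tsupport _ h)
      rw [mem_closedBall_zero_iff] at this
      have : R2 ≤ R := (le_max_right _ _).trans (le_max_left _ _)
      linarith
  have m1 : ∀ p, |w1 p| ≤ M := fun p => (hC1 p).trans ((le_max_left _ _).trans (le_max_left _ _))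
  have m2 : ∀ p, ‖fderiv ℝ w1 p‖ ≤ M := fun p =>
    (hC2 p).trans ((le_max_right _ _).trans (le_max_left _ _))
  have m3 : ∀ p, |w2 p| ≤ M := fun p => (hC3 p).trans ((le_max_left _ _).trans (le_max_right _ _))
  have m4 : ∀ p, ‖fderiv ℝ w2 p‖ ≤ M := fun p =>
    (hC4 p).trans ((le_max_right _ _).trans (le_max_right _ _))
  have hM0 : 0 ≤ M := (abs_nonneg _).trans (m1 0)
  have bψ : ∀ p : RST, |ψ p| ≤ 2 * M * ‖p.1‖ := fun p => hψb p.1 p.2 M fun y => ⟨m1 _, m3 _⟩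
  obtain ⟨L, hL⟩ := (isCompact_closedBall (0 : RST) (R + 1)).exists_bound_of_continuousOn
    (hψ.continuous_fderiv one_ne_zero).continuousOn
  have bDψ : ∀ p : RST, ‖p‖ ≤ R + 1 → ‖fderiv ℝ ψ p‖ ≤ L := fun p hp =>
    hL p (by rwa [mem_closedBall_zero_iff])
  have hL0 : 0 ≤ L := (norm_nonneg _).trans (bDψ 0 (by simp; linarith))
  have hχ' : ContDiff ℝ 1 χ := hχ.of_le (by norm_num)
  have hDχ : ContDiff ℝ 1 (fderiv ℝ χ) := hχ.fderiv_right (by norm_num)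
  have hX : ∀ e : ℝ × ℝ, ContDiff ℝ 1 (fun y => fderiv ℝ χ y e) := fun e =>
    hDχ.clm_apply contDiff_const
  have hDout : ∀ y : ℝ × ℝ, 2 < ‖y‖ → fderiv ℝ χ y = 0 := by
    intro y hy
    have : χ =ᶠ[𝓝 y] fun _ => 1 := by
      have hcz : ContinuousAt (fun z : ℝ × ℝ => ‖z‖) y := by fun_prop
      filter_upwards [hcz.eventually (lt_mem_nhds hy)] with z hz using hχ1 z hz.le
    rw [this.fderiv_eq]; simp
  have hDin : ∀ y : ℝ × ℝ, ‖y‖ < 1 → fderiv ℝ χ y = 0 := by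
    intro y hy
    have : χ =ᶠ[𝓝 y] fun _ => 0 := by
      have hcz : ContinuousAt (fun z : ℝ × ℝ => ‖z‖) y := by fun_prop
      filter_upwards [hcz.eventually (gt_mem_nhds hy)] with z hz using hχ0 z hz.le
    rw [this.fderiv_eq]; simp
  have hDout' : ∀ y : ℝ × ℝ, 2 ≤ ‖y‖ → fderiv ℝ χ y = 0 := by
    intro y hy
    have hlim : Tendsto (fun k : ℕ => fderiv ℝ χ ((1 + 1 / ((k : ℝ) + 1)) • y)) atTop
        (𝓝 (fderiv ℝ χ ((1 + 0 : ℝ) • y))) := by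
      refine (hDχ.continuous.tendsto _).comp ?_
      exact (tendsto_const_nhds.add tendsto_one_div_add_atTop_nhds_zero_nat).smul_const y
    have hz : (fun k : ℕ => fderiv ℝ χ ((1 + 1 / ((k : ℝ) + 1)) • y)) = fun _ => 0 := by
      funext k
      apply hDout
      have hk : 0 < 1 / ((k : ℝ) + 1) := by positivity
      rw [norm_smul, Real.norm_of_nonneg (by positivity)]
      nlinarith
    rw [hz] at hlim
    have := tendsto_nhds_unique tendsto_const_nhds hlim
    simpa using this.symm
  set A : (ℝ × ℝ) → (RST → ℝ) → ℕ → RST → ℝ := fun e w n p =>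
    χ (((n : ℝ) + 1) • p.1) * w p + ((n : ℝ) + 1) * ψ p * fderiv ℝ χ (((n : ℝ) + 1) • p.1) e with hA
  have hAc : ∀ e w n, ContDiff ℝ 1 w → ContDiff ℝ 1 (A e w n) := by
    intro e w n hw
    have := hX e
    have t1 : ContDiff ℝ 1 (fun p : RST => χ (((n : ℝ) + 1) • p.1)) := hχ'.comp (by fun_prop)
    have t2 : ContDiff ℝ 1 (fun p : RST => fderiv ℝ χ (((n : ℝ) + 1) • p.1) e) :=
      (hX e).comp (g := fun y => fderiv ℝ χ y e) (f := fun p : RST => ((n : ℝ) + 1) • p.1)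
        (by fun_prop)
    exact (t1.mul hw).add ((contDiff_const.mul hψ).mul t2)
  have hNn : ∀ (n : ℕ) (x : ℝ × ℝ), ‖((n : ℝ) + 1) • x‖ = ((n : ℝ) + 1) * ‖x‖ := fun n x => by
    rw [norm_smul, Real.norm_of_nonneg (by positivity)]
  have hA0 : ∀ e w n p, (∀ p, R < ‖p‖ → w p = 0) → R < ‖p‖ → A e w n p = 0 := by
    intro e w n p hw hp
    simp only [hA, hw p hp, mul_zero, zero_add]
    rcases lt_max_iff.1 (show R < max ‖p.1‖ ‖p.2‖ from hp) with h | h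
    · rw [hDout']
      · simp
      · rw [hNn]
        have : (0 : ℝ) ≤ n := n.cast_nonneg
        nlinarith
    · have := hψb p.1 p.2 0 (fun y => by
        have := hw0 (y, p.2) (h.trans_le (le_max_right _ _))
        simp [this.1, this.2])
      have h0 : ψ p = 0 := by simpa using this
      simp [h0]
  have hAk : ∀ e w n, (∀ p, R < ‖p‖ → w p = 0) → HasCompactSupport (A e w n) := by
    intro e w n hw
    refine HasCompactSupport.intro (isCompact_closedBall 0 R) fun p hp => hA0 e w n p hw ?_
    rw [mem_closedBall_zero_iff] at hp
    exact not_le.1 hp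
  have hAb : ∀ e w (n : ℕ), ‖e‖ ≤ 1 → ContDiff ℝ 1 w → (∀ p, |w p| ≤ M) →
      (∀ p, ‖fderiv ℝ w p‖ ≤ M) → _ := fun e w n he hw b1 b2 =>
    cut_bounds (N := (n : ℝ) + 1) hχ' (hX e) hw hψ hB hM0 hL0 (by linarith : (0 : ℝ) ≤ R) hχ1
      (fun y hy => by rw [hDout' y hy]; simp) bχ bDχ (fun y => (bX e he y).1)
      (fun y => (bX e he y).2) b1 b2 bψ bDψ (by positivity)
  have hAd : ∀ e w n p y, ContDiff ℝ 1 w → fderiv ℝ (A e w n) p (y, 0) =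
      χ (((n : ℝ) + 1) • p.1) * fderiv ℝ w p (y, 0)
      + w p * (((n : ℝ) + 1) * fderiv ℝ χ (((n : ℝ) + 1) • p.1) y)
      + (((n : ℝ) + 1) * ψ p * (((n : ℝ) + 1) *
          fderiv ℝ (fderiv ℝ χ) (((n : ℝ) + 1) • p.1) y e)
        + fderiv ℝ χ (((n : ℝ) + 1) • p.1) e * (((n : ℝ) + 1) * fderiv ℝ ψ p (y, 0))) := by
    intro e w n p y hw
    have d1 := lift_fderiv (hχ'.differentiable one_ne_zero) ((n : ℝ) + 1) p
    have d2 := lift_fderiv ((hX e).differentiable one_ne_zero) ((n : ℝ) + 1) p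
    have d3 := (hw.differentiable one_ne_zero p).hasFDerivAt
    have d4 := (hψ.differentiable one_ne_zero p).hasFDerivAt
    have d5 := (d1.mul d3).add ((d4.const_mul ((n : ℝ) + 1)).mul d2)
    have d6 : fderiv ℝ (A e w n) p = _ := d5.fderiv
    have d7 : ∀ z, fderiv ℝ (fun y => fderiv ℝ χ y e) z y = fderiv ℝ (fderiv ℝ χ) z y e := by
      intro z
      have hd : HasFDerivAt (fun y => (fderiv ℝ χ y) e)
          (((ContinuousLinearMap.apply ℝ ℝ e)).comp (fderiv ℝ (fderiv ℝ χ) z)) z :=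
        (ContinuousLinearMap.apply ℝ ℝ e).hasFDerivAt.comp z
          (hDχ.differentiable one_ne_zero z).hasFDerivAt
      rw [hd.fderiv]; simp
    rw [d6]
    simp [d7]
  refine ⟨A (0, -1) w1, A (1, 0) w2, R,
    M + 4 * M * B + M * (R + 1) + 2 * (5 * M * B + B * L), by linarith, by positivity,
    fun n => ⟨⟨hAc _ _ _ h1, hAc _ _ _ h2⟩, ⟨hAk _ _ _ fun p hp => (hw0 p hp).1,
      hAk _ _ _ fun p hp => (hw0 p hp).2⟩, ?_, ?_, ?_, ?_, ?_, ?_⟩⟩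
  · intro p
    rw [hAd _ _ _ _ _ h1, hAd _ _ _ _ _ h2, hψ1, hψ2]
    have hsym : IsSymmSndFDerivAt ℝ χ (((n : ℝ) + 1) • p.1) :=
      hχ.contDiffAt.isSymmSndFDerivAt (by simp)
    have hs := hsym (1, 0) (0, 1)
    have hneg : ((0, -1) : ℝ × ℝ) = - (0, 1) := by simp
    have D := hdiv p
    rw [hneg]
    simp only [map_neg]
    rw [hs]
    linear_combination χ (((n : ℝ) + 1) • p.1) * D
  · intro p hp
    have hn : (0 : ℝ) < (n : ℝ) + 1 := by positivity
    have : ‖((n : ℝ) + 1) • p.1‖ < 1 := by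
      rw [hNn]; rw [lt_div_iff₀ hn] at hp; linarith
    simp [hA, hχ0 _ this.le, hDin _ this]
  · intro p hp
    have hn : (0 : ℝ) < (n : ℝ) + 1 := by positivity
    have : 2 ≤ ‖((n : ℝ) + 1) • p.1‖ := by
      rw [hNn]; rw [div_le_iff₀ hn] at hp; linarith
    simp [hA, hχ1 _ this, hDout' _ this]
  · intro p hp
    exact ⟨hA0 _ _ _ _ (fun p hp => (hw0 p hp).1) hp, hA0 _ _ _ _ (fun p hp => (hw0 p hp).2) hp⟩
  · intro p
    exact ⟨(hAb (0, -1) w1 n (by simp [Prod.norm_def]) h1 m1 m2).1 p,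
      (hAb (1, 0) w2 n (by simp [Prod.norm_def]) h2 m3 m4).1 p⟩
  · intro p hp
    exact ⟨(hAb (0, -1) w1 n (by simp [Prod.norm_def]) h1 m1 m2).2 p hp,
      (hAb (1, 0) w2 n (by simp [Prod.norm_def]) h2 m3 m4).2 p hp⟩

lemma ae_fst_ne : ∀ᵐ p : RST, p.1 ≠ 0 := by
  have h : ∀ᵐ x : ℝ × ℝ, x ≠ 0 := by
    rw [ae_iff]; simp
  rw [Measure.volume_eq_prod]
  exact Measure.quasiMeasurePreserving_fst.ae h

lemma restrict_UU : (volume : Measure RST).restrict {p : RST | 0 < p.2} = volume.restrict UU := by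
  refine Measure.restrict_congr_set ?_
  filter_upwards [ae_fst_ne] with p hp
  exact propext ⟨fun h => ⟨hp, h⟩, fun h => h.2⟩

lemma EF_bound {u1 u2 a1 a2 : RST → ℝ} {p : RST} {c d : ℝ} (hc1 : |u1 p| ≤ c) (hc2 : |u2 p| ≤ c)
    (hd1 : ‖fderiv ℝ a1 p‖ ≤ d) (hd2 : ‖fderiv ℝ a2 p‖ ≤ d) :
    |EF u1 u2 a1 a2 p| ≤ 2 * (c * d) + 4 * (c * c * d) := by
  have c0 : 0 ≤ c := (abs_nonneg _).trans hc1
  have e : ∀ (a : RST → ℝ) (z : RST), ‖fderiv ℝ a p‖ ≤ d → ‖z‖ ≤ 1 → |fderiv ℝ a p z| ≤ d := by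
    intro a z ha hz
    have d0 : 0 ≤ d := (norm_nonneg _).trans ha
    calc |fderiv ℝ a p z| ≤ ‖fderiv ℝ a p‖ * ‖z‖ := (fderiv ℝ a p).le_opNorm z
      _ ≤ d * 1 := by gcongr
      _ = d := mul_one d
  have n1 : ‖(((1, 0), 0) : RST)‖ ≤ 1 := by simp [Prod.norm_def]
  have n2 : ‖(((0, 1), 0) : RST)‖ ≤ 1 := by simp [Prod.norm_def]
  have n3 : ‖((0, 1) : RST)‖ ≤ 1 := by simp [Prod.norm_def]
  have t1 : ∀ x y : ℝ, |x| ≤ c → |y| ≤ d → |x * y| ≤ c * d := by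
    intro x y hx hy; rw [abs_mul]; gcongr
  have t2 : ∀ x x' y : ℝ, |x| ≤ c → |x'| ≤ c → |y| ≤ d → |x * x' * y| ≤ c * c * d := by
    intro x x' y hx hx' hy; rw [abs_mul, abs_mul]; gcongr
  have s1 := t1 _ _ hc1 (e a1 _ hd1 n3)
  have s2 := t1 _ _ hc2 (e a2 _ hd2 n3)
  have s3 := t2 _ _ _ hc1 hc1 (e a1 _ hd1 n1)
  have s4 := t2 _ _ _ hc1 hc2 (e a1 _ hd1 n2)
  have s5 := t2 _ _ _ hc2 hc1 (e a2 _ hd2 n1)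
  have s6 := t2 _ _ _ hc2 hc2 (e a2 _ hd2 n2)
  rw [abs_le] at *
  unfold EF
  constructor <;> linarith

lemma EF_cont {u1 u2 a1 a2 : RST → ℝ} (hu1 : ContinuousOn u1 UU) (hu2 : ContinuousOn u2 UU)
    (h1 : ContDiff ℝ 1 a1) (h2 : ContDiff ℝ 1 a2) : ContinuousOn (EF u1 u2 a1 a2) UU := by
  have c1 := fun e => (cont_fderiv_apply h1 e).continuousOn (s := UU)
  have c2 := fun e => (cont_fderiv_apply h2 e).continuousOn (s := UU)
  exact ((((((hu1.mul (c1 _)).add (hu2.mul (c2 _))).add ((hu1.mul hu1).mul (c1 _))).add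
    ((hu1.mul hu2).mul (c1 _))).add ((hu2.mul hu1).mul (c2 _))).add ((hu2.mul hu2).mul (c2 _)))

lemma EF_congr {u1 u2 a1 a2 c1 c2 : RST → ℝ} {p : RST} (h1 : a1 =ᶠ[𝓝 p] c1) (h2 : a2 =ᶠ[𝓝 p] c2) :
    EF u1 u2 a1 a2 p = EF u1 u2 c1 c2 p := by
  simp [EF, h1.fderiv_eq, h2.fderiv_eq]

lemma main_scalar {u1 u2 q : RST → ℝ} (hu1 : ContDiffOn ℝ 1 u1 UU) (hu2 : ContDiffOn ℝ 1 u2 UU)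
    (hq : ContDiffOn ℝ 1 q UU)
    (hD : ∀ p ∈ UU, fderiv ℝ u1 p ((1, 0), 0) + fderiv ℝ u2 p ((0, 1), 0) = 0)
    (hm1 : ∀ p ∈ UU, fderiv ℝ u1 p (0, 1) + u1 p * fderiv ℝ u1 p ((1, 0), 0)
      + u2 p * fderiv ℝ u1 p ((0, 1), 0) + fderiv ℝ q p ((1, 0), 0) = 0)
    (hm2 : ∀ p ∈ UU, fderiv ℝ u2 p (0, 1) + u1 p * fderiv ℝ u2 p ((1, 0), 0)
      + u2 p * fderiv ℝ u2 p ((0, 1), 0) + fderiv ℝ q p ((0, 1), 0) = 0)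
    {b : ℝ} (hb : -(1 / 2) < b)
    (hgr : ∀ R : ℝ, 0 < R → ∃ C, 0 ≤ C ∧ ∀ p ∈ UU, ‖p.1‖ ≤ R →
      |u1 p| ≤ C * ‖p.1‖ ^ b ∧ |u2 p| ≤ C * ‖p.1‖ ^ b)
    {z1 z2 : ℝ × ℝ → ℝ}
    (hz1 : ∀ x, x ≠ 0 → Tendsto (fun t => u1 (x, t)) (𝓝[>] 0) (𝓝 (z1 x)))
    (hz2 : ∀ x, x ≠ 0 → Tendsto (fun t => u2 (x, t)) (𝓝[>] 0) (𝓝 (z2 x)))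
    {w1 w2 : RST → ℝ} (h1 : ContDiff ℝ 1 w1) (h2 : ContDiff ℝ 1 w2)
    (k1 : HasCompactSupport w1) (k2 : HasCompactSupport w2)
    (hdiv : ∀ p, fderiv ℝ w1 p ((1, 0), 0) + fderiv ℝ w2 p ((0, 1), 0) = 0) :
    Integrable (fun x => z1 x * w1 (x, 0) + z2 x * w2 (x, 0)) ∧
    IntegrableOn (EF u1 u2 w1 w2) {p : RST | 0 < p.2} ∧
    (∫ x, (z1 x * w1 (x, 0) + z2 x * w2 (x, 0)))
      + ∫ p in {p : RST | 0 < p.2}, EF u1 u2 w1 w2 p = 0 := by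
  obtain ⟨a1, a2, R, K, hR, hK, ha⟩ := exists_cutoff h1 h2 k1 k2 hdiv
  obtain ⟨C, hC, hCb⟩ := hgr (R + 1) (by linarith)
  set δ : ℕ → ℝ := fun n => 1 / ((n : ℝ) + 1) with hδ
  have hδ0 : ∀ n, 0 < δ n := fun n => by simp only [hδ]; positivity
  have hδlim : Tendsto δ atTop (𝓝 0) := tendsto_one_div_add_atTop_nhds_zero_nat
  have hδlim' : Tendsto δ atTop (𝓝[>] 0) :=
    tendsto_nhdsWithin_iff.2 ⟨hδlim, Eventually.of_forall hδ0⟩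
  have hδ2 : ∀ r : ℝ, 0 < r → ∀ᶠ n : ℕ in atTop, 2 / ((n : ℝ) + 1) < r := by
    intro r hr
    have : Tendsto (fun n => 2 * δ n) atTop (𝓝 (2 * 0)) := hδlim.const_mul 2
    rw [mul_zero] at this
    filter_upwards [this.eventually (gt_mem_nhds hr)] with n hn
    simpa [hδ, div_eq_mul_inv] using hn
  -- dominating functions
  set H : ℝ × ℝ → ℝ := fun x =>
    2 * C * K * ‖x‖ ^ (b - 1) + 4 * C * C * K * ‖x‖ ^ (2 * b - 1) with hH
  have hHi : IntegrableOn H (Metric.ball 0 (R + 1)) :=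
    ((integrableOn_norm_rpow (by linarith) _).const_mul _).add
      ((integrableOn_norm_rpow (by linarith) _).const_mul _)
  have hH0 : ∀ x, 0 ≤ H x := fun x => by simp only [hH]; positivity
  set g : RST → ℝ := fun p => (Metric.ball (0 : ℝ × ℝ) (R + 1)).indicator H p.1 *
    (Metric.ball (0 : ℝ) (R + 1)).indicator (fun _ => (1 : ℝ)) p.2 with hg
  have hgi : Integrable g := by
    have i1 : Integrable ((Metric.ball (0 : ℝ × ℝ) (R + 1)).indicator H) :=
      (integrable_indicator_iff measurableSet_ball).2 hHi
    have i2 : Integrable ((Metric.ball (0 : ℝ) (R + 1)).indicator (fun _ => (1 : ℝ))) :=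
      (integrable_indicator_iff measurableSet_ball).2 (integrableOn_const (measure_ball_lt_top.ne))
    exact i1.mul_prod i2
  have hg0 : ∀ p, 0 ≤ g p := fun p =>
    mul_nonneg (indicator_nonneg (fun x _ => hH0 x) _) (indicator_nonneg (fun _ _ => zero_le_one) _)
  have hEb : ∀ n, ∀ p ∈ UU, |EF u1 u2 (a1 n) (a2 n) p| ≤ g p := by
    intro n p hp
    obtain ⟨-, -, -, -, -, hout, -, hder⟩ := ha n
    rcases lt_or_ge ‖p‖ (R + 1) with h | h
    · have hx : 0 < ‖p.1‖ := norm_pos_iff.2 hp.1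
      have hx1 : ‖p.1‖ < R + 1 := (norm_fst_le p).trans_lt h
      have hx2 : ‖p.2‖ < R + 1 := (norm_snd_le p).trans_lt h
      have hgp : g p = H p.1 := by
        simp only [hg]
        rw [indicator_of_mem (by rwa [mem_ball_zero_iff]),
          indicator_of_mem (by rwa [mem_ball_zero_iff]), mul_one]
      obtain ⟨d1, d2⟩ := hder p h.le
      obtain ⟨c1, c2⟩ := hCb p hp hx1.le
      have d1' : ‖fderiv ℝ (a1 n) p‖ ≤ K / ‖p.1‖ := by rw [le_div_iff₀ hx]; linarith
      have d2' : ‖fderiv ℝ (a2 n) p‖ ≤ K / ‖p.1‖ := by rw [le_div_iff₀ hx]; linarith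
      refine (EF_bound c1 c2 d1' d2').trans (le_of_eq ?_)
      rw [hgp]
      simp only [hH]
      rw [Real.rpow_sub_one hx.ne', Real.rpow_sub_one hx.ne', two_mul b, Real.rpow_add hx]
      ring
    · have hn : ∀ᶠ z : RST in 𝓝 p, R < ‖z‖ := by
        have hcz : ContinuousAt (fun z : RST => ‖z‖) p := by fun_prop
        exact hcz.eventually (lt_mem_nhds (by linarith))
      have e1 : a1 n =ᶠ[𝓝 p] fun _ => 0 := by filter_upwards [hn] with z hz using (hout z hz).1
      have e2 : a2 n =ᶠ[𝓝 p] fun _ => 0 := by filter_upwards [hn] with z hz using (hout z hz).2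
      rw [EF_congr e1 e2]
      simpa [EF] using hg0 p
  have hEev : ∀ p ∈ UU, ∀ᶠ n in atTop, EF u1 u2 (a1 n) (a2 n) p = EF u1 u2 w1 w2 p := by
    intro p hp
    filter_upwards [hδ2 ‖p.1‖ (norm_pos_iff.2 hp.1)] with n hn
    obtain ⟨-, -, -, -, heq, -, -, -⟩ := ha n
    have hcz : ContinuousAt (fun z : RST => ‖z.1‖) p := by fun_prop
    have hev := hcz.eventually (lt_mem_nhds hn)
    refine EF_congr ?_ ?_
    · filter_upwards [hev] with z hz using (heq z hz.le).1
    · filter_upwards [hev] with z hz using (heq z hz.le).2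
  have hEw : ∀ p ∈ UU, |EF u1 u2 w1 w2 p| ≤ g p := by
    intro p hp
    obtain ⟨n, hn⟩ := (hEev p hp).exists
    rw [← hn]; exact hEb n p hp
  have hUm : MeasurableSet UU := isOpen_UU.measurableSet
  have hIw : IntegrableOn (EF u1 u2 w1 w2) UU := by
    refine Integrable.mono' hgi.integrableOn
      ((EF_cont hu1.continuousOn hu2.continuousOn h1 h2).aestronglyMeasurable hUm) ?_
    filter_upwards [ae_restrict_mem hUm] with p hp using hEw p hp
  -- first limit
  have lim1 : Tendsto (fun n => ∫ p in UU, ({p : RST | δ n < p.2}).indicator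
      (EF u1 u2 (a1 n) (a2 n)) p) atTop (𝓝 (∫ p in UU, EF u1 u2 w1 w2 p)) := by
    refine tendsto_integral_of_dominated_convergence g ?_ hgi.integrableOn ?_ ?_
    · intro n
      refine AEStronglyMeasurable.indicator ?_
        (isOpen_lt continuous_const continuous_snd).measurableSet
      exact (EF_cont hu1.continuousOn hu2.continuousOn (ha n).1.1 (ha n).1.2).aestronglyMeasurable hUm
    · intro n
      filter_upwards [ae_restrict_mem hUm] with p hp
      exact (norm_indicator_le_norm_self _ _).trans (hEb n p hp)
    · filter_upwards [ae_restrict_mem hUm] with p hp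
      refine tendsto_const_nhds.congr' ?_
      filter_upwards [hEev p hp, hδlim.eventually (gt_mem_nhds hp.2)] with n hn hn2
      rw [indicator_of_mem (by exact hn2), hn]
  -- identity at level n
  have hid : ∀ n, ∫ p in UU, ({p : RST | δ n < p.2}).indicator (EF u1 u2 (a1 n) (a2 n)) p
      = - ∫ x, (u1 (x, δ n) * a1 n (x, δ n) + u2 (x, δ n) * a2 n (x, δ n)) := by
    intro n
    obtain ⟨⟨A1, A2⟩, ⟨B1, B2⟩, D, Z, -⟩ := ha n
    rw [← weak_away hu1 hu2 hq hD hm1 hm2 A1 A2 B1 B2 D (hδ0 n) (fun p hp => (Z p hp).1)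
      (fun p hp => (Z p hp).2) (hδ0 n), ← restrict_UU,
      setIntegral_indicator (isOpen_lt continuous_const continuous_snd).measurableSet]
    congr 2
    ext p
    simp only [mem_inter_iff, mem_setOf_eq]
    exact ⟨fun h => h.2, fun h => ⟨(hδ0 n).trans h, h⟩⟩
  -- second limit
  set h : ℝ × ℝ → ℝ := (Metric.ball (0 : ℝ × ℝ) (R + 1)).indicator
    (fun x => 2 * C * K * ‖x‖ ^ b) with hh
  have hhi : Integrable h := (integrable_indicator_iff measurableSet_ball).2
    ((integrableOn_norm_rpow (by linarith) _).const_mul _)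
  have hne : ∀ᵐ x : ℝ × ℝ, x ≠ 0 := by rw [ae_iff]; simp
  have Xm : ∀ n, AEStronglyMeasurable (fun x =>
      u1 (x, δ n) * a1 n (x, δ n) + u2 (x, δ n) * a2 n (x, δ n)) (volume : Measure (ℝ × ℝ)) := by
    intro n
    rw [← Measure.restrict_univ (μ := volume), ← Measure.restrict_congr_set
      (s := {x : ℝ × ℝ | x ≠ 0}) (by
        filter_upwards [hne] with x hx
        exact propext ⟨fun _ => trivial, fun _ => hx⟩)]
    refine ContinuousOn.aestronglyMeasurable ?_ isOpen_ne.measurableSet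
    have hmap : MapsTo (fun x : ℝ × ℝ => (x, δ n)) {x : ℝ × ℝ | x ≠ 0} UU :=
      fun x hx => ⟨hx, hδ0 n⟩
    have hct : Continuous (fun x : ℝ × ℝ => (x, δ n)) := by fun_prop
    exact ((hu1.continuousOn.comp hct.continuousOn hmap).mul
      ((ha n).1.1.continuous.comp hct).continuousOn).add
      ((hu2.continuousOn.comp hct.continuousOn hmap).mul
      ((ha n).1.2.continuous.comp hct).continuousOn)
  have Xb : ∀ n, ∀ x : ℝ × ℝ, x ≠ 0 →
      ‖u1 (x, δ n) * a1 n (x, δ n) + u2 (x, δ n) * a2 n (x, δ n)‖ ≤ h x := by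
    intro n x hx
    obtain ⟨-, -, -, -, -, hout, hbd, -⟩ := ha n
    rcases lt_or_ge ‖x‖ (R + 1) with hxR | hxR
    · rw [hh, indicator_of_mem (by rwa [mem_ball_zero_iff])]
      obtain ⟨c1, c2⟩ := hCb (x, δ n) ⟨hx, hδ0 n⟩ hxR.le
      obtain ⟨e1, e2⟩ := hbd (x, δ n)
      simp only at c1 c2
      refine (norm_add_le _ _).trans ?_
      rw [norm_mul, norm_mul]
      simp only [Real.norm_eq_abs]
      calc _ ≤ (C * ‖x‖ ^ b) * K + (C * ‖x‖ ^ b) * K := by gcongr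
        _ = _ := by ring
    · have : R < ‖(x, δ n)‖ := by
        have := norm_fst_le (x, δ n)
        simp only at this
        linarith
      obtain ⟨e1, e2⟩ := hout _ this
      rw [e1, e2]
      simp only [mul_zero, add_zero, norm_zero]
      exact indicator_nonneg (fun x _ => by positivity) _
  have Xl : ∀ x : ℝ × ℝ, x ≠ 0 → Tendsto (fun n =>
      u1 (x, δ n) * a1 n (x, δ n) + u2 (x, δ n) * a2 n (x, δ n)) atTop
      (𝓝 (z1 x * w1 (x, 0) + z2 x * w2 (x, 0))) := by
    intro x hx
    have hwl : ∀ w : RST → ℝ, ContDiff ℝ 1 w →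
        Tendsto (fun n => w (x, δ n)) atTop (𝓝 (w (x, 0))) := by
      intro w hw
      exact (hw.continuous.tendsto (x, 0)).comp (tendsto_const_nhds.prodMk_nhds hδlim)
    refine ((((hz1 x hx).comp hδlim').mul (hwl w1 h1)).add
      (((hz2 x hx).comp hδlim').mul (hwl w2 h2))).congr' ?_
    filter_upwards [hδ2 ‖x‖ (norm_pos_iff.2 hx)] with n hn
    obtain ⟨-, -, -, -, heq, -, -, -⟩ := ha n
    obtain ⟨e1, e2⟩ := heq (x, δ n) hn.le
    simp only [Function.comp, e1, e2]
  have lim2 := tendsto_integral_of_dominated_convergence h Xm hhi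
    (fun n => by filter_upwards [hne] with x hx using Xb n x hx)
    (by filter_upwards [hne] with x hx using Xl x hx)
  refine ⟨?_, ?_, ?_⟩
  · refine Integrable.mono' hhi (aestronglyMeasurable_of_tendsto_ae atTop Xm
      (by filter_upwards [hne] with x hx using Xl x hx)) ?_
    filter_upwards [hne] with x hx
    exact le_of_tendsto (Xl x hx).norm (Eventually.of_forall fun n => Xb n x hx)
  · rw [IntegrableOn, restrict_UU]; exact hIw
  · rw [restrict_UU]
    simp only [hid] at lim1
    have := tendsto_nhds_unique lim1 lim2.neg
    rw [this]; ring

/-- removable-singularity result.  A classical solution `(v, π)` of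
incompressible Euler on `(ℝ²∖{0})×(0,∞)` with `|v(x,t)| ≤ C₀·|x|^{1−1/μ}` for `μ > 2/3`,
converging locally uniformly on `ℝ²∖{0}` to `v₀` as `t → 0⁺`, is a weak solution on all of
`ℝ²×[0,∞)` with initial data `v₀`: for every divergence-free test field
`w ∈ C_c^∞(ℝ²×[0,∞);ℝ²)`,
`∫ v₀·w(·,0) dx + ∫₀^∞∫ v·∂_t w + (v⊗v):∇_x w dx dt = 0`,
all integrals being absolutely convergent. -/
theorem removable_singularity_weak_solution (μ C₀ : ℝ) (hμ : 2 / 3 < μ)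
    (v : (ℝ × ℝ) × ℝ → ℝ × ℝ) (π : (ℝ × ℝ) × ℝ → ℝ)
    (hv : ContDiffOn ℝ 1 v {p : (ℝ × ℝ) × ℝ | p.1 ≠ 0 ∧ 0 < p.2})
    (hπ : ContDiffOn ℝ 1 π {p : (ℝ × ℝ) × ℝ | p.1 ≠ 0 ∧ 0 < p.2})
    (hdiv : ∀ (x : ℝ × ℝ), x ≠ 0 → ∀ t : ℝ, 0 < t → divx v (x, t) = 0)
    (hmom₁ : ∀ (x : ℝ × ℝ), x ≠ 0 → ∀ t : ℝ, 0 < t →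
      deriv (fun s => (v (x, s)).1) t
          + (v (x, t)).1 * fderiv ℝ (fun y => (v (y, t)).1) x (1, 0)
          + (v (x, t)).2 * fderiv ℝ (fun y => (v (y, t)).1) x (0, 1)
          + fderiv ℝ (fun y => π (y, t)) x (1, 0) = 0)
    (hmom₂ : ∀ (x : ℝ × ℝ), x ≠ 0 → ∀ t : ℝ, 0 < t →
      deriv (fun s => (v (x, s)).2) t
          + (v (x, t)).1 * fderiv ℝ (fun y => (v (y, t)).2) x (1, 0)
          + (v (x, t)).2 * fderiv ℝ (fun y => (v (y, t)).2) x (0, 1)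
          + fderiv ℝ (fun y => π (y, t)) x (0, 1) = 0)
    (hgrow : ∀ (x : ℝ × ℝ), x ≠ 0 → ∀ t : ℝ, 0 < t →
      Real.sqrt ((v (x, t)).1 ^ 2 + (v (x, t)).2 ^ 2)
        ≤ C₀ * Real.sqrt (x.1 ^ 2 + x.2 ^ 2) ^ (1 - 1 / μ))
    (v₀ : ℝ × ℝ → ℝ × ℝ)
    (hconv : ∀ K : Set (ℝ × ℝ), IsCompact K → K ⊆ {x : ℝ × ℝ | x ≠ 0} →
      TendstoUniformlyOn (fun (t : ℝ) (x : ℝ × ℝ) => v (x, t)) v₀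
        (nhdsWithin 0 (Set.Ioi 0)) K) :
    ∀ w : (ℝ × ℝ) × ℝ → ℝ × ℝ, ContDiff ℝ (⊤ : ℕ∞) w → HasCompactSupport w →
      (∀ p : (ℝ × ℝ) × ℝ, divx w p = 0) →
      Integrable (fun x : ℝ × ℝ =>
          (v₀ x).1 * (w (x, 0)).1 + (v₀ x).2 * (w (x, 0)).2) ∧
      IntegrableOn (eulerForm v w) {p : (ℝ × ℝ) × ℝ | 0 < p.2} ∧
      (∫ x : ℝ × ℝ, ((v₀ x).1 * (w (x, 0)).1 + (v₀ x).2 * (w (x, 0)).2))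
          + ∫ p in {p : (ℝ × ℝ) × ℝ | 0 < p.2}, eulerForm v w p = 0 := by
  intro w hw hcw hdw
  have hfst : ContDiff ℝ 1 (fun z : ℝ × ℝ => z.1) := contDiff_fst
  have hsnd : ContDiff ℝ 1 (fun z : ℝ × ℝ => z.2) := contDiff_snd
  have hw' : ContDiff ℝ 1 w := hw.of_le (by exact_mod_cast le_top)
  have h1 : ContDiff ℝ 1 (fun p => (w p).1) := hfst.comp hw'
  have h2 : ContDiff ℝ 1 (fun p => (w p).2) := hsnd.comp hw'
  have hu1 : ContDiffOn ℝ 1 (fun p => (v p).1) UU := hfst.comp_contDiffOn hv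
  have hu2 : ContDiffOn ℝ 1 (fun p => (v p).2) UU := hsnd.comp_contDiffOn hv
  have hd : ∀ {f : RST → ℝ}, ContDiffOn ℝ 1 f UU → ∀ p ∈ UU, DifferentiableAt ℝ f (p.1, p.2) :=
    fun hf p hp => (hf.contDiffAt (isOpen_UU.mem_nhds hp)).differentiableAt one_ne_zero
  have hEF : eulerForm v w = EF (fun p => (v p).1) (fun p => (v p).2) (fun p => (w p).1)
      (fun p => (w p).2) := by
    funext p
    have d1 : DifferentiableAt ℝ (fun p => (w p).1) (p.1, p.2) := h1.differentiable one_ne_zero _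
    have d2 : DifferentiableAt ℝ (fun p => (w p).2) (p.1, p.2) := h2.differentiable one_ne_zero _
    have s1 := slice_deriv d1
    have s2 := slice_deriv d2
    have s3 := slice_fderiv d1
    have s4 := slice_fderiv d2
    simp only [eulerForm, EF, s1, s2, s3, s4]
  rw [hEF]
  have hμ0 : 0 < μ := by linarith
  have hα : -(1 / 2) < 1 - 1 / μ := by
    have : 1 / μ < 3 / 2 := by rw [div_lt_iff₀ hμ0]; linarith
    linarith
  set α := 1 - 1 / μ with hαdef
  refine main_scalar (b := min α 0) hu1 hu2 hπ ?_ ?_ ?_ (lt_min hα (by norm_num)) ?_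
    (z1 := fun x => (v₀ x).1) (z2 := fun x => (v₀ x).2) ?_ ?_ h1 h2 ?_ ?_ ?_
  · intro p hp
    have := hdiv p.1 hp.1 p.2 hp.2
    simp only [divx] at this
    rw [slice_fderiv (hd hu1 p hp), slice_fderiv (hd hu2 p hp)] at this
    exact this
  · intro p hp
    have := hmom₁ p.1 hp.1 p.2 hp.2
    rw [slice_deriv (hd hu1 p hp), slice_fderiv (hd hu1 p hp), slice_fderiv (hd hu1 p hp),
      slice_fderiv (hd hπ p hp)] at this
    exact this
  · intro p hp
    have := hmom₂ p.1 hp.1 p.2 hp.2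
    rw [slice_deriv (hd hu2 p hp), slice_fderiv (hd hu2 p hp), slice_fderiv (hd hu2 p hp),
      slice_fderiv (hd hπ p hp)] at this
    exact this
  · intro R hR
    have hR2 : 0 < 2 * R := by positivity
    refine ⟨|C₀| * (2 * R) ^ (α - min α 0), by positivity, fun p hp hpR => ?_⟩
    have hx : 0 < ‖p.1‖ := norm_pos_iff.2 hp.1
    set r := Real.sqrt (p.1.1 ^ 2 + p.1.2 ^ 2) with hr
    have n1 : |p.1.1| ≤ ‖p.1‖ := norm_fst_le p.1
    have n2 : |p.1.2| ≤ ‖p.1‖ := norm_snd_le p.1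
    have r1 : ‖p.1‖ ≤ r := by
      rw [Prod.norm_def]
      refine max_le ?_ ?_
      · exact Real.abs_le_sqrt (by nlinarith [sq_nonneg p.1.2])
      · exact Real.abs_le_sqrt (by nlinarith [sq_nonneg p.1.1])
    have r2 : r ≤ 2 * R := by
      rw [hr, Real.sqrt_le_left hR2.le]
      have q1 : p.1.1 ^ 2 ≤ R ^ 2 := sq_le_sq' (by linarith [(abs_le.1 n1).1]) (by linarith [(abs_le.1 n1).2])
      have q2 : p.1.2 ^ 2 ≤ R ^ 2 := sq_le_sq' (by linarith [(abs_le.1 n2).1]) (by linarith [(abs_le.1 n2).2])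
      nlinarith
    have r0 : 0 < r := hx.trans_le r1
    have key : C₀ * r ^ α ≤ |C₀| * (2 * R) ^ (α - min α 0) * ‖p.1‖ ^ (min α 0) := by
      have e : r ^ α = r ^ (α - min α 0) * r ^ (min α 0) := by
        rw [← Real.rpow_add r0]; congr 1; ring
      have e1 : r ^ (α - min α 0) ≤ (2 * R) ^ (α - min α 0) :=
        Real.rpow_le_rpow r0.le r2 (sub_nonneg.2 (min_le_left _ _))
      have e2 : r ^ (min α 0) ≤ ‖p.1‖ ^ (min α 0) :=
        Real.rpow_le_rpow_of_nonpos hx r1 (min_le_right _ _)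
      rw [e, mul_assoc]
      gcongr
      exact le_abs_self C₀
    have hg := (hgrow p.1 hp.1 p.2 hp.2).trans key
    refine ⟨le_trans ?_ hg, le_trans ?_ hg⟩
    · exact Real.abs_le_sqrt (by nlinarith [sq_nonneg (v (p.1, p.2)).2])
    · exact Real.abs_le_sqrt (by nlinarith [sq_nonneg (v (p.1, p.2)).1])
  · intro x hx
    have := (hconv {x} isCompact_singleton (by simpa using hx)).tendsto_at (mem_singleton x)
    exact (continuous_fst.tendsto _).comp this
  · intro x hx
    have := (hconv {x} isCompact_singleton (by simpa using hx)).tendsto_at (mem_singleton x)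
    exact (continuous_snd.tendsto _).comp this
  · exact hcw.comp_left (g := Prod.fst) rfl
  · exact hcw.comp_left (g := Prod.snd) rfl
  · intro p
    have := hdw p
    simp only [divx] at this
    have d1 : DifferentiableAt ℝ (fun p => (w p).1) (p.1, p.2) := h1.differentiable one_ne_zero _
    have d2 : DifferentiableAt ℝ (fun p => (w p).2) (p.1, p.2) := h2.differentiable one_ne_zero _
    rw [slice_fderiv d1, slice_fderiv d2] at this
    exact this
end
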